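/- Let G be a graph in the class 𝒞, let C be a minimal separator of G of size at least 2 that is an independent set, and let A and B be components of G∖C that are full to C. Then there exist two vertices x and y in C, a chordless path P_A from x to y with interior in A, and a chordless path P_B from x to y with interior in B, such that every vertex of C∖{x,y} has neighbors in the interior of both P_A and P_B; moreover V(P_A) ∪ V(P_B) induces a hole. -/

import Mathlib

open SimpleGraph

variable {V : Type} [Fintype V] [DecidableEq V]

/-- `p` is a chordless (induced) path in `G`: a path such that the only edges of `G`
between its vertices are the edges of the path. -/
def IsInducedPathW (G : SimpleGraph V) {a b : V} (p : G.Walk a b) : Prop :=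
  p.IsPath ∧ ∀ u v : V, u ∈ p.support → v ∈ p.support → G.Adj u v → p.toSubgraph.Adj u v

/-- A hole of length `n` in `G`: an induced (chordless) cycle of length `n ≥ 4`,
given by an injection of `ZMod n` into `G` whose adjacencies are exactly the consecutive ones. -/
def IsHoleEmb (G : SimpleGraph V) (n : ℕ) (f : ZMod n → V) : Prop :=
  4 ≤ n ∧ Function.Injective f ∧
    ∀ i j : ZMod n, G.Adj (f i) (f j) ↔ (j = i + 1 ∨ i = j + 1)

/-- `G` contains an even hole (induced even cycle of length at least 4). -/
def ContainsEvenHole (G : SimpleGraph V) : Prop :=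
  ∃ (n : ℕ) (f : ZMod n → V), IsHoleEmb G n f ∧ Even n

/-- `G` contains a square (hole of length 4). -/
def ContainsSquare (G : SimpleGraph V) : Prop :=
  ∃ f : ZMod 4 → V, IsHoleEmb G 4 f

/-- `G` contains a theta as an induced subgraph: three internally vertex-disjoint chordless
paths from `a` to `b`, each of length at least 2, with no edges between the paths other than
those incident to `a` or `b` specified by the paths. -/
def ContainsTheta (G : SimpleGraph V) : Prop :=
  ∃ (a b : V) (p₁ p₂ p₃ : G.Walk a b),
    (IsInducedPathW G p₁ ∧ IsInducedPathW G p₂ ∧ IsInducedPathW G p₃) ∧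
    (2 ≤ p₁.length ∧ 2 ≤ p₂.length ∧ 2 ≤ p₃.length) ∧
    (∀ w : V, ((w ∈ p₁.support ∧ w ∈ p₂.support) ∨ (w ∈ p₁.support ∧ w ∈ p₃.support) ∨
          (w ∈ p₂.support ∧ w ∈ p₃.support)) → (w = a ∨ w = b)) ∧
    (∀ u w : V, u ≠ a → u ≠ b → w ≠ a → w ≠ b →
      ((u ∈ p₁.support ∧ w ∈ p₂.support) ∨ (u ∈ p₁.support ∧ w ∈ p₃.support) ∨
       (u ∈ p₂.support ∧ w ∈ p₃.support)) → ¬G.Adj u w)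

/-- `G` contains a prism as an induced subgraph. -/
def ContainsPrism (G : SimpleGraph V) : Prop :=
  ∃ (a₁ b₁ a₂ b₂ a₃ b₃ : V) (p₁ : G.Walk a₁ b₁) (p₂ : G.Walk a₂ b₂) (p₃ : G.Walk a₃ b₃),
    (IsInducedPathW G p₁ ∧ IsInducedPathW G p₂ ∧ IsInducedPathW G p₃) ∧
    (1 ≤ p₁.length ∧ 1 ≤ p₂.length ∧ 1 ≤ p₃.length) ∧
    (G.Adj a₁ a₂ ∧ G.Adj a₂ a₃ ∧ G.Adj a₁ a₃) ∧
    (G.Adj b₁ b₂ ∧ G.Adj b₂ b₃ ∧ G.Adj b₁ b₃) ∧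
    (∀ w : V, ¬(w ∈ p₁.support ∧ w ∈ p₂.support) ∧ ¬(w ∈ p₁.support ∧ w ∈ p₃.support) ∧
          ¬(w ∈ p₂.support ∧ w ∈ p₃.support)) ∧
    (∀ u w : V, u ∈ p₁.support → w ∈ p₂.support → G.Adj u w →
      (u = a₁ ∧ w = a₂) ∨ (u = b₁ ∧ w = b₂)) ∧
    (∀ u w : V, u ∈ p₁.support → w ∈ p₃.support → G.Adj u w →
      (u = a₁ ∧ w = a₃) ∨ (u = b₁ ∧ w = b₃)) ∧
    (∀ u w : V, u ∈ p₂.support → w ∈ p₃.support → G.Adj u w →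
      (u = a₂ ∧ w = a₃) ∨ (u = b₂ ∧ w = b₃))

/-- `G` contains a pyramid as an induced subgraph. -/
def ContainsPyramid (G : SimpleGraph V) : Prop :=
  ∃ (a b₁ b₂ b₃ : V) (p₁ : G.Walk a b₁) (p₂ : G.Walk a b₂) (p₃ : G.Walk a b₃),
    (IsInducedPathW G p₁ ∧ IsInducedPathW G p₂ ∧ IsInducedPathW G p₃) ∧
    (1 ≤ p₁.length ∧ 1 ≤ p₂.length ∧ 1 ≤ p₃.length) ∧
    ((2 ≤ p₁.length ∧ 2 ≤ p₂.length) ∨ (2 ≤ p₁.length ∧ 2 ≤ p₃.length) ∨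
     (2 ≤ p₂.length ∧ 2 ≤ p₃.length)) ∧
    (G.Adj b₁ b₂ ∧ G.Adj b₂ b₃ ∧ G.Adj b₁ b₃) ∧
    (∀ w : V, ((w ∈ p₁.support ∧ w ∈ p₂.support) ∨ (w ∈ p₁.support ∧ w ∈ p₃.support) ∨
          (w ∈ p₂.support ∧ w ∈ p₃.support)) → w = a) ∧
    (∀ u w : V, u ∈ p₁.support → w ∈ p₂.support → u ≠ a → w ≠ a → G.Adj u w →
      u = b₁ ∧ w = b₂) ∧
    (∀ u w : V, u ∈ p₁.support → w ∈ p₃.support → u ≠ a → w ≠ a → G.Adj u w →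
      u = b₁ ∧ w = b₃) ∧
    (∀ u w : V, u ∈ p₂.support → w ∈ p₃.support → u ≠ a → w ≠ a → G.Adj u w →
      u = b₂ ∧ w = b₃)

/-- `G` contains the cube as an induced subgraph: a hole of length 6 together with
two non-adjacent vertices `u, v` outside it, `u` adjacent to the even positions and
`v` adjacent to the odd positions. -/
def ContainsCube (G : SimpleGraph V) : Prop :=
  ∃ (f : ZMod 6 → V) (u v : V), IsHoleEmb G 6 f ∧
    u ∉ Set.range f ∧ v ∉ Set.range f ∧ ¬G.Adj u v ∧
    (∀ m : ZMod 6, G.Adj u (f m) ↔ (m = 0 ∨ m = 2 ∨ m = 4)) ∧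
    (∀ m : ZMod 6, G.Adj v (f m) ↔ (m = 1 ∨ m = 3 ∨ m = 5))

/-- `G` contains an even wheel: a hole plus a vertex outside it having at least 3 and
an even number of neighbors on the hole. -/
def ContainsEvenWheel (G : SimpleGraph V) : Prop :=
  ∃ (n : ℕ) (f : ZMod n → V) (u : V), IsHoleEmb G n f ∧ u ∉ Set.range f ∧
    3 ≤ {m : ZMod n | G.Adj u (f m)}.ncard ∧ Even {m : ZMod n | G.Adj u (f m)}.ncard

/-- `G` contains a butterfly: a wheel `(H,v)` with `N_H(v) = {a,b,c,d}`,
`ab, cd ∈ E(G)` and `bc, da ∉ E(G)`. -/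
def ContainsButterfly (G : SimpleGraph V) : Prop :=
  ∃ (n : ℕ) (f : ZMod n → V) (u : V), IsHoleEmb G n f ∧ u ∉ Set.range f ∧
    ∃ i j : ZMod n, i ≠ j ∧ i ≠ j + 1 ∧ i + 1 ≠ j ∧ i + 1 ≠ j + 1 ∧
      ¬G.Adj (f (i + 1)) (f j) ∧ ¬G.Adj (f (j + 1)) (f i) ∧
      (∀ m : ZMod n, G.Adj u (f m) ↔ (m = i ∨ m = i + 1 ∨ m = j ∨ m = j + 1))

/-- A 2-wheel in `G`: a hole `f` together with two distinct centers `u, v` outside the hole,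
each having at least three neighbors on the hole. -/
def Is2WheelCfg (G : SimpleGraph V) (n : ℕ) (f : ZMod n → V) (u v : V) : Prop :=
  IsHoleEmb G n f ∧ u ≠ v ∧ u ∉ Set.range f ∧ v ∉ Set.range f ∧
  3 ≤ {m : ZMod n | G.Adj u (f m)}.ncard ∧ 3 ≤ {m : ZMod n | G.Adj v (f m)}.ncard

/-- The 2-wheel `(f, {u,v})` is nested: the hole splits at `f i` and `f (i+d)` into two arcs,
with all neighbors of `u` on one arc and all neighbors of `v` on the other. -/
def NestedCfg (G : SimpleGraph V) (n : ℕ) (f : ZMod n → V) (u v : V) : Prop :=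
  ∃ (i : ZMod n) (d : ℕ), 1 ≤ d ∧ d < n ∧
    (∀ m : ZMod n, G.Adj u (f m) → ∃ e : ℕ, e ≤ d ∧ m = i + (e : ZMod n)) ∧
    (∀ m : ZMod n, G.Adj v (f m) → ∃ e : ℕ, e ≤ n - d ∧ m = i + (d : ZMod n) + (e : ZMod n))

/-- The 2-wheel `(f, {u,v})` is the cube. -/
def CubeCfg (G : SimpleGraph V) (n : ℕ) (f : ZMod n → V) (u v : V) : Prop :=
  n = 6 ∧ ∃ i : ZMod n,
    (∀ m : ZMod n, G.Adj u (f m) ↔ (m = i ∨ m = i + 2 ∨ m = i + 4)) ∧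
    (∀ m : ZMod n, G.Adj v (f m) ↔ (m = i + 1 ∨ m = i + 3 ∨ m = i + 5))

/-- The 2-wheel `(f, {u,v})` is a cousin wheel: `N_H(u) = {h₁,h₂,h₃}` and
`N_H(v) = {h₂,h₃,h₄}` for four consecutive vertices of the hole (or with `u, v` swapped). -/
def CousinCfg (G : SimpleGraph V) (n : ℕ) (f : ZMod n → V) (u v : V) : Prop :=
  (∃ i : ZMod n,
    (∀ m : ZMod n, G.Adj u (f m) ↔ (m = i ∨ m = i + 1 ∨ m = i + 2)) ∧
    (∀ m : ZMod n, G.Adj v (f m) ↔ (m = i + 1 ∨ m = i + 2 ∨ m = i + 3))) ∨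
  (∃ i : ZMod n,
    (∀ m : ZMod n, G.Adj v (f m) ↔ (m = i ∨ m = i + 1 ∨ m = i + 2)) ∧
    (∀ m : ZMod n, G.Adj u (f m) ↔ (m = i + 1 ∨ m = i + 2 ∨ m = i + 3)))

/-- A `u`-sector of the hole `f`: a subpath from `f i` to `f (i+d)` (`1 ≤ d < n`)
whose two ends are adjacent to `u` and whose internal vertices are not. -/
def IsSector (G : SimpleGraph V) (n : ℕ) (f : ZMod n → V) (u : V) (i : ZMod n) (d : ℕ) : Prop :=
  1 ≤ d ∧ d < n ∧ G.Adj u (f i) ∧ G.Adj u (f (i + (d : ZMod n))) ∧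
    ∀ m : ℕ, 0 < m → m < d → ¬G.Adj u (f (i + (m : ZMod n)))

/-- The class 𝒞: (theta, prism, pyramid, butterfly)-free graphs in which every 2-wheel
with non-adjacent centers is a nested wheel or a cousin wheel. -/
def InClassC (G : SimpleGraph V) : Prop :=
  ¬ContainsTheta G ∧ ¬ContainsPrism G ∧ ¬ContainsPyramid G ∧ ¬ContainsButterfly G ∧
  ∀ (n : ℕ) (f : ZMod n → V) (u v : V), Is2WheelCfg G n f u v → ¬G.Adj u v →
    (NestedCfg G n f u v ∨ CousinCfg G n f u v)

/-- `G` contains `S_{k,k,k}` as an induced subgraph: a root `r` and three legs of `k` edges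
each, with no other adjacencies among these vertices. -/
def ContainsSpider (G : SimpleGraph V) (k : ℕ) : Prop :=
  ∃ (r : V) (f : Fin 3 → Fin k → V),
    (∀ (j : Fin 3) (m : Fin k), f j m ≠ r) ∧
    (∀ (j₁ : Fin 3) (m₁ : Fin k) (j₂ : Fin 3) (m₂ : Fin k),
      f j₁ m₁ = f j₂ m₂ → j₁ = j₂ ∧ m₁ = m₂) ∧
    (∀ (j : Fin 3) (m : Fin k), G.Adj r (f j m) ↔ (m : ℕ) = 0) ∧
    (∀ (j₁ : Fin 3) (m₁ : Fin k) (j₂ : Fin 3) (m₂ : Fin k),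
      G.Adj (f j₁ m₁) (f j₂ m₂) ↔
        (j₁ = j₂ ∧ ((m₁ : ℕ) + 1 = (m₂ : ℕ) ∨ (m₂ : ℕ) + 1 = (m₁ : ℕ))))

/-- A `k`-span-wheel in `G`: a hole `f` of length `n`, with `x = f 0` and `y = f p`
non-adjacent, the two paths `P_A = f 0, f 1, …, f p` and `P_B = f 0, f (n-1), …, f p`,
and centers `c 0, …, c (k-1)` outside the hole such that `{c i} ∪ {x,y}` is independent,
every center has at least three neighbors on the hole and neighbors in the interiors of
both `P_A` and `P_B`, and the neighbors of the centers appear along both `P_A` and `P_B`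
(from `x` to `y`) in the order of the centers. -/
def IsSpanWheel (G : SimpleGraph V) (k n p : ℕ) (f : ZMod n → V) (c : Fin k → V) : Prop :=
  IsHoleEmb G n f ∧
  2 ≤ p ∧ p ≤ n - 2 ∧
  ¬G.Adj (f 0) (f (p : ZMod n)) ∧
  Function.Injective c ∧
  (∀ i : Fin k, c i ∉ Set.range f) ∧
  (∀ i j : Fin k, i ≠ j → ¬G.Adj (c i) (c j)) ∧
  (∀ i : Fin k, ¬G.Adj (c i) (f 0)) ∧
  (∀ i : Fin k, ¬G.Adj (c i) (f (p : ZMod n))) ∧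
  (∀ i : Fin k, 3 ≤ {m : ZMod n | G.Adj (c i) (f m)}.ncard) ∧
  (∀ i : Fin k, ∃ a : ℕ, 0 < a ∧ a < p ∧ G.Adj (c i) (f (a : ZMod n))) ∧
  (∀ i : Fin k, ∃ b : ℕ, p < b ∧ b < n ∧ G.Adj (c i) (f (b : ZMod n))) ∧
  (∀ i j : Fin k, i < j → ∀ a₁ a₂ : ℕ, a₁ ≤ p → a₂ ≤ p →
    G.Adj (c i) (f (a₁ : ZMod n)) → G.Adj (c j) (f (a₂ : ZMod n)) → a₁ ≤ a₂) ∧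
  (∀ i j : Fin k, i < j → ∀ b₁ b₂ : ℕ, p ≤ b₁ → b₁ ≤ n → p ≤ b₂ → b₂ ≤ n →
    G.Adj (c i) (f (b₁ : ZMod n)) → G.Adj (c j) (f (b₂ : ZMod n)) → b₂ ≤ b₁)

/-- `X` separates `s` from `t` in `G`: neither is in `X` and every walk from `s` to `t`
meets `X`. -/
def Separates (G : SimpleGraph V) (X : Set V) (s t : V) : Prop :=
  s ∉ X ∧ t ∉ X ∧ ∀ p : G.Walk s t, ∃ w ∈ p.support, w ∈ X

/-- `X` is a minimal separator of `G`: for some pair `s, t` it is an inclusion-wise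
minimal `st`-separator. -/
def MinSeparator (G : SimpleGraph V) (X : Set V) : Prop :=
  ∃ s t : V, Separates G X s t ∧ ∀ Y ⊆ X, Separates G Y s t → Y = X

/-- `A` is a connected component of `G ∖ C` that is full to `C`. -/
def IsFullComponent (G : SimpleGraph V) (C A : Set V) : Prop :=
  A.Nonempty ∧ Disjoint A C ∧ (G.induce A).Connected ∧
  (∀ a ∈ A, ∀ w : V, G.Adj a w → w ∈ A ∪ C) ∧
  (∀ x ∈ C, ∃ a ∈ A, G.Adj x a)

/-- A tree decomposition of `G` with tree `T` and bags `B`. -/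
def IsTreeDecomp (G : SimpleGraph V) {ι : Type} (T : SimpleGraph ι) (B : ι → Finset V) : Prop :=
  T.IsTree ∧
  (∀ v : V, ∃ i, v ∈ B i) ∧
  (∀ u v : V, G.Adj u v → ∃ i, u ∈ B i ∧ v ∈ B i) ∧
  (∀ (v : V) (i j : ι), v ∈ B i → v ∈ B j →
    ∀ (p : T.Walk i j), p.IsPath → ∀ x ∈ p.support, v ∈ B x)

/-- The treewidth of a finite graph: the least `w` such that `G` has a tree decomposition
all of whose bags have size at most `w + 1`. -/
noncomputable def treewidth (G : SimpleGraph V) : ℕ :=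
  sInf {w : ℕ | ∃ (m : ℕ) (T : SimpleGraph (Fin m)) (B : Fin m → Finset V),
    IsTreeDecomp G T B ∧ ∀ i, (B i).card ≤ w + 1}

/-- A graph is chordal iff it has no hole. -/
def IsChordal (G : SimpleGraph V) : Prop :=
  ¬∃ (n : ℕ) (f : ZMod n → V), IsHoleEmb G n f

/-- `H` is obtained from `G` by a minimal fill-in (minimal chordal completion). -/
def IsMinimalChordalCompletion (G H : SimpleGraph V) : Prop :=
  G ≤ H ∧ IsChordal H ∧ ∀ H' : SimpleGraph V, G ≤ H' → H' ≤ H → IsChordal H' → H' = H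

/-- `Ω` is a potential maximal clique of `G`: a maximal clique of some minimal chordal
completion of `G`. -/
def IsPMC (G : SimpleGraph V) (Ω : Set V) : Prop :=
  ∃ H : SimpleGraph V, IsMinimalChordalCompletion G H ∧ H.IsClique Ω ∧
    ∀ Ω' : Set V, H.IsClique Ω' → Ω ⊆ Ω' → Ω' = Ω

/-- `n` satisfies the Ramsey property for `(t, k)`: every graph on `n` vertices has a
clique of size `t` or an independent set of size `k`. -/
def RamseyProp (n t k : ℕ) : Prop :=
  ∀ G : SimpleGraph (Fin n),
    (∃ S : Finset (Fin n), G.IsNClique t S) ∨ (∃ S : Finset (Fin n), Gᶜ.IsNClique k S)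

/-- The Ramsey number `R(t, k)`. -/
noncomputable def ramseyNumber (t k : ℕ) : ℕ := sInf {n : ℕ | RamseyProp n t k}

/-!
Inside each of the two components take an inclusion-minimal connected set that still has a neighbor
of every vertex of `C`. Three vertices of `C` are joined through such a set by a tripod: three
connected legs meeting in a claw or in a triangle. A tripod in each of the two sets with the same
three ends closes up to a theta, a pyramid or a prism. As these are excluded, each minimal set is
the vertex set of a chordless path; by minimality each end of the path is the only neighbor on the
path of some vertex of `C`. Comparing tripods once more, such pendant vertices `x` and `y` can be
chosen common to both paths. Then the two paths together with `x` and `y` form a hole, and all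
other vertices of `C` have neighbors on both paths.
-/

section Connectivity

variable {W : Type} {G : SimpleGraph W} {S T : Set W}

/-- No vertex is shared by `S` and `T`, and no edge joins them. -/
def Anticomplete (G : SimpleGraph W) (S T : Set W) : Prop :=
  ∀ s ∈ S, ∀ t ∈ T, s ≠ t ∧ ¬G.Adj s t

lemma Anticomplete.symm (h : Anticomplete G S T) : Anticomplete G T S :=
  fun t ht s hs => ⟨(h s hs t ht).1.symm, fun hadj => (h s hs t ht).2 hadj.symm⟩

lemma Anticomplete.mono {S' T' : Set W} (h : Anticomplete G S T) (hS : S' ⊆ S) (hT : T' ⊆ T) :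
    Anticomplete G S' T' :=
  fun s hs t ht => h s (hS hs) t (hT ht)

lemma connected_induce_singleton (v : W) : (G.induce {v}).Connected :=
  Connected.of_subsingleton

lemma connected_induce_insert {v s : W} (hS : (G.induce S).Connected) (hs : s ∈ S)
    (hvs : G.Adj v s) : (G.induce (insert v S)).Connected :=
  connected_induce_union (connected_induce_singleton v).preconnected hS.preconnected rfl hs hvs

/-- `M` is a connected set containing `u` and `v`. -/
structure Links (G : SimpleGraph W) (M : Set W) (u v : W) : Prop where
  connected : (G.induce M).Connected
  left_mem : u ∈ M
  right_mem : v ∈ M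

lemma Links.symm {M : Set W} {u v : W} (h : Links G M u v) : Links G M v u :=
  ⟨h.connected, h.right_mem, h.left_mem⟩

lemma Links.insert {M : Set W} {u v w : W} (h : Links G M u v) (hw : G.Adj w u) :
    Links G (insert w M) w v :=
  ⟨connected_induce_insert h.connected h.left_mem hw, Set.mem_insert w M,
    Set.mem_insert_of_mem w h.right_mem⟩

lemma Links.trans {M N : Set W} {u v w : W} (hM : Links G M u v) (hN : Links G N v w) :
    Links G (M ∪ N) u w :=
  ⟨induce_union_connected hM.connected.preconnected hN.connected.preconnected
    ⟨v, hM.right_mem, hN.left_mem⟩, Or.inl hM.left_mem, Or.inr hN.right_mem⟩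

lemma exists_walk_support_subset {u v : W} (hS : (G.induce S).Connected) (hu : u ∈ S)
    (hv : v ∈ S) : ∃ w : G.Walk u v, ∀ x ∈ w.support, x ∈ S := by
  obtain ⟨w⟩ := hS.preconnected ⟨u, hu⟩ ⟨v, hv⟩
  refine ⟨w.map (Embedding.induce S).toHom, fun x hx => ?_⟩
  obtain ⟨y, -, rfl⟩ := List.mem_map.1 (w.support_map _ ▸ hx)
  exact y.2

lemma exists_adj_boundary (hS : (G.induce S).Connected) (hTS : T ⊂ S) (hT : T.Nonempty) :
    ∃ t ∈ T, ∃ s ∈ S \ T, G.Adj t s := by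
  obtain ⟨t, ht⟩ := hT
  obtain ⟨s, hs, hsT⟩ := Set.exists_of_ssubset hTS
  obtain ⟨w, hw⟩ := exists_walk_support_subset hS (hTS.subset ht) hs
  obtain ⟨d, hd, hd₁, hd₂⟩ := w.exists_boundary_dart T ht hsT
  exact ⟨d.fst, hd₁, d.snd, ⟨hw _ (w.dart_snd_mem_support_of_mem_darts hd), hd₂⟩, d.adj⟩

lemma exists_connected_diff_singleton (hS : (G.induce S).Connected) (hfin : S.Finite)
    (hT : (G.induce T).Connected) (hTS : T ⊂ S) :
    ∃ v ∈ S \ T, (G.induce (S \ {v})).Connected := by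
  have hTne : T.Nonempty := Set.nonempty_coe_sort.1 hT.nonempty
  have hfam : {R : Set W | (G.induce R).Connected ∧ R ⊂ S}.Finite :=
    hfin.finite_subsets.subset fun R hR => hR.2.subset
  obtain ⟨R, hTR, hR⟩ := hfam.exists_le_maximal (show T ∈ _ from ⟨hT, hTS⟩)
  obtain ⟨r, hr, v, hv, hadj⟩ := exists_adj_boundary hS hR.prop.2 (hTne.mono hTR)
  have hins : (G.induce (insert v R)).Connected := connected_induce_insert hR.prop.1 hr hadj.symm
  have hsub : insert v R ⊆ S := Set.insert_subset hv.1 hR.prop.2.subset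
  have hSv : insert v R = S := by
    by_contra hne
    exact hv.2 (hR.le_of_ge ⟨hins, hsub.ssubset_of_ne hne⟩ (Set.subset_insert v R)
      (Set.mem_insert v R))
  refine ⟨v, ⟨hv.1, fun h => hv.2 (hTR h)⟩, ?_⟩
  rw [← hSv, Set.insert_sdiff_self_of_notMem hv.2]
  exact hR.prop.1

/-- `Q` is a connected set that reaches out towards `P`: it avoids `P`, contains `u`, and `q` is
its only vertex with neighbors in `P`. -/
structure IsConnector (G : SimpleGraph W) (P : Set W) (u q : W) (Q : Set W) : Prop where
  connected : (G.induce Q).Connected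
  start_mem : u ∈ Q
  tip_mem : q ∈ Q
  disjoint : ∀ w ∈ Q, w ∉ P
  exists_adj : ∃ p ∈ P, G.Adj q p
  eq_tip : ∀ w ∈ Q, ∀ p ∈ P, G.Adj w p → w = q

lemma exists_isConnector_of_walk {P : Set W} {u v : W} (w : G.Walk u v) (hu : u ∉ P)
    (hv : v ∈ P) : ∃ q Q, IsConnector G P u q Q ∧ ∀ x ∈ Q, x ∈ w.support := by
  induction w with
  | nil => exact absurd hv hu
  | @cons u u' v hadj w ih =>
    by_cases hP : ∃ p ∈ P, G.Adj u p
    · refine ⟨u, {u}, ⟨connected_induce_singleton u, rfl, rfl, ?_, hP, fun x hx _ _ _ => hx⟩, ?_⟩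
      · rintro x rfl
        exact hu
      · rintro x rfl
        exact Walk.start_mem_support _
    · push Not at hP
      obtain ⟨q, Q, hQ, hsub⟩ := ih (fun hu' => hP u' hu' hadj) hv
      refine ⟨q, insert u Q, ⟨connected_induce_insert hQ.connected hQ.start_mem hadj,
        Set.mem_insert u Q, Set.mem_insert_of_mem u hQ.tip_mem, ?_, hQ.exists_adj, ?_⟩, ?_⟩
      · exact Set.forall_mem_insert.2 ⟨hu, hQ.disjoint⟩
      · exact Set.forall_mem_insert.2 ⟨fun p hp h => absurd h (hP p hp), hQ.eq_tip⟩
      · rw [Walk.support_cons]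
        exact Set.forall_mem_insert.2
          ⟨List.mem_cons_self, fun x hx => List.mem_cons_of_mem u (hsub x hx)⟩

lemma exists_isConnector {P : Set W} {u : W} (hS : (G.induce S).Connected) (hu : u ∈ S)
    (huP : u ∉ P) (hSP : (S ∩ P).Nonempty) : ∃ q, ∃ Q ⊆ S, IsConnector G P u q Q := by
  obtain ⟨v, hvS, hvP⟩ := hSP
  obtain ⟨w, hw⟩ := exists_walk_support_subset hS hu hvS
  obtain ⟨q, Q, hQ, hsub⟩ := exists_isConnector_of_walk w huP hvP
  exact ⟨q, Q, fun x hx => hw x (hsub x hx), hQ⟩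

end Connectivity

section ChordlessPaths

variable {W : Type} {G : SimpleGraph W} {S : Set W} {n : ℕ} {p : ℕ → W}

/-- The vertices `p 0, p 1, …, p n` form, in this order, a chordless path. The values `p i` with
`n < i` are irrelevant. -/
structure IsChordless (G : SimpleGraph W) (n : ℕ) (p : ℕ → W) : Prop where
  inj : ∀ {i j}, i ≤ n → j ≤ n → p i = p j → i = j
  adj_iff : ∀ {i j}, i ≤ n → j ≤ n → (G.Adj (p i) (p j) ↔ j = i + 1 ∨ i = j + 1)

namespace IsChordless

lemma adj_succ (hp : IsChordless G n p) {i : ℕ} (hi : i + 1 ≤ n) : G.Adj (p i) (p (i + 1)) :=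
  (hp.adj_iff (by lia) hi).2 (Or.inl rfl)

lemma eq_iff (hp : IsChordless G n p) {i j : ℕ} (hi : i ≤ n) (hj : j ≤ n) : p i = p j ↔ i = j :=
  ⟨hp.inj hi hj, fun h => h ▸ rfl⟩

lemma reverse (hp : IsChordless G n p) : IsChordless G n (fun i => p (n - i)) where
  inj hi hj h := by have := hp.inj (by lia) (by lia) h; lia
  adj_iff hi hj := by rw [hp.adj_iff (by lia) (by lia)]; lia

lemma take (hp : IsChordless G n p) {m : ℕ} (hm : m ≤ n) : IsChordless G m p where
  inj hi hj := hp.inj (hi.trans hm) (hj.trans hm)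
  adj_iff hi hj := hp.adj_iff (hi.trans hm) (hj.trans hm)

lemma links_segment (hp : IsChordless G n p) {i j : ℕ} (hij : i ≤ j) (hj : j ≤ n) :
    Links G (p '' Set.Icc i j) (p i) (p j) := by
  induction j, hij using Nat.le_induction with
  | base =>
    rw [Set.Icc_self, Set.image_singleton]
    exact ⟨connected_induce_singleton (p i), rfl, rfl⟩
  | succ j hij ih =>
    rw [← Set.insert_Icc_right_eq_Icc_add_one (by lia), Set.image_insert_eq]
    exact ((ih (by lia)).symm.insert (hp.adj_succ hj).symm).symm

lemma anticomplete_segments (hp : IsChordless G n p) {i j k l : ℕ} (hjk : j + 2 ≤ k)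
    (hl : l ≤ n) : Anticomplete G (p '' Set.Icc i j) (p '' Set.Icc k l) := by
  rintro _ ⟨x, ⟨-, hx⟩, rfl⟩ _ ⟨y, ⟨hy, hyl⟩, rfl⟩
  rw [Ne, hp.eq_iff (by lia) (by lia), hp.adj_iff (by lia) (by lia)]
  lia

end IsChordless

lemma exists_walk_getVert_eq (h : ∀ i < n, G.Adj (p i) (p (i + 1))) :
    ∃ w : G.Walk (p 0) (p n), w.length = n ∧ ∀ i ≤ n, w.getVert i = p i := by
  induction n with
  | zero => exact ⟨Walk.nil, by simp, by simp⟩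
  | succ n ih =>
    obtain ⟨w, hlen, hw⟩ := ih fun i hi => h i (by lia)
    refine ⟨w.concat (h n n.lt_succ_self), by simp [hlen], fun i hi => ?_⟩
    rw [Walk.concat_eq_append, Walk.getVert_append, hlen]
    rcases Nat.lt_or_ge i n with hin | hin
    · rw [if_pos hin, hw i hin.le]
    · obtain rfl | rfl : i = n ∨ i = n + 1 := by lia
      · simp
      · simp

lemma IsChordless.exists_isInducedPathW (hp : IsChordless G n p) :
    ∃ w : G.Walk (p 0) (p n), IsInducedPathW G w ∧ ∀ x, x ∈ w.support ↔ ∃ i ≤ n, p i = x := by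
  obtain ⟨w, hlen, hw⟩ := exists_walk_getVert_eq (p := p) fun i (hi : i < n) => hp.adj_succ hi
  have hsupp : ∀ x, x ∈ w.support ↔ ∃ i ≤ n, p i = x := fun x => by
    rw [Walk.mem_support_iff_exists_getVert, hlen]
    exact ⟨fun ⟨i, hx, hi⟩ => ⟨i, hi, (hw i hi).symm.trans hx⟩,
      fun ⟨i, hi, hx⟩ => ⟨i, (hw i hi).trans hx, hi⟩⟩
  have hsub : ∀ i < n, w.toSubgraph.Adj (p i) (p (i + 1)) := fun i hi => by
    rw [← hw i hi.le, ← hw (i + 1) hi]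
    exact w.toSubgraph_adj_getVert (hi.trans_eq hlen.symm)
  refine ⟨w, ⟨?_, fun u v hu hv hadj => ?_⟩, hsupp⟩
  · rw [← Walk.IsPath.getVert_injOn_iff]
    intro i hi j hj hij
    rw [Set.mem_ofPred_eq, hlen] at hi hj
    exact hp.inj hi hj ((hw i hi).symm.trans (hij.trans (hw j hj)))
  · obtain ⟨i, hi, rfl⟩ := (hsupp u).1 hu
    obtain ⟨j, hj, rfl⟩ := (hsupp v).1 hv
    obtain rfl | rfl := (hp.adj_iff hi hj).1 hadj
    · exact hsub i hj
    · exact (hsub j hi).symm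

/-- A chordless path `p 0, …, p n` whose internal vertices lie in `X`. -/
structure IsChordlessThrough (G : SimpleGraph W) (X : Set W) (n : ℕ) (p : ℕ → W) : Prop
    extends IsChordless G n p where
  mem : ∀ {i}, 0 < i → i < n → p i ∈ X

namespace IsChordlessThrough

variable {X : Set W}

lemma initial_segment_subset (hp : IsChordlessThrough G X n p) {i : ℕ} (hi : i < n) :
    p '' Set.Icc 0 i ⊆ insert (p 0) X := by
  rintro _ ⟨k, ⟨-, hk⟩, rfl⟩
  rcases k.eq_zero_or_pos with rfl | hk₀
  · exact Set.mem_insert _ _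
  · exact Set.mem_insert_of_mem _ (hp.mem hk₀ (by lia))

lemma final_segment_subset (hp : IsChordlessThrough G X n p) {j : ℕ} (hj : 0 < j) :
    p '' Set.Icc j n ⊆ insert (p n) X := by
  rintro _ ⟨k, ⟨hjk, hk⟩, rfl⟩
  rcases hk.eq_or_lt with rfl | hkn
  · exact Set.mem_insert _ _
  · exact Set.mem_insert_of_mem _ (hp.mem (by lia) hkn)

end IsChordlessThrough

/-- Along `p 0, p 1, …, p n` the graph distance is the difference of the indices. -/
def IsGeodesic (G : SimpleGraph W) (n : ℕ) (p : ℕ → W) : Prop :=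
  ∀ {i j}, i ≤ j → j ≤ n → G.dist (p i) (p j) = j - i

lemma exists_isGeodesic (hG : G.Connected) (u v : W) :
    ∃ p : ℕ → W, p 0 = u ∧ p (G.dist u v) = v ∧ IsGeodesic G (G.dist u v) p := by
  obtain ⟨w, hw⟩ := hG.exists_walk_length_eq_dist u v
  refine ⟨w.getVert, w.getVert_zero, by rw [← hw, w.getVert_length], fun {i j} hij hj => ?_⟩
  have hle : ∀ a b, a ≤ b → b ≤ w.length → G.dist (w.getVert a) (w.getVert b) ≤ b - a := by
    intro a b hab hb
    induction b, hab using Nat.le_induction with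
    | base => simp
    | succ b hab ih =>
      have hadj := dist_eq_one_iff_adj.2 (w.adj_getVert_succ hb)
      have := hG.dist_triangle (u := w.getVert a) (v := w.getVert b) (w := w.getVert (b + 1))
      have := ih (by lia)
      lia
  have h₀ := hle 0 i i.zero_le (by lia)
  have h₁ := hle i j hij (by lia)
  have h₂ := hle j w.length (by lia) le_rfl
  rw [w.getVert_zero] at h₀
  rw [w.getVert_length] at h₂
  have := hG.dist_triangle (u := u) (v := w.getVert i) (w := v)
  have := hG.dist_triangle (u := w.getVert i) (v := w.getVert j) (w := v)
  lia

lemma IsGeodesic.isChordless (hp : IsGeodesic G n p) : IsChordless G n p where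
  inj {i j} hi hj h := by
    rcases le_total i j with hij | hij
    · have := hp hij hj
      rw [h, dist_self] at this
      lia
    · have := hp hij hi
      rw [h, dist_self] at this
      lia
  adj_iff {i j} hi hj := by
    rw [← dist_eq_one_iff_adj]
    rcases le_total i j with hij | hij
    · rw [hp hij hj]
      lia
    · rw [dist_comm, hp hij hi]
      lia

lemma IsChordless.coe {p : ℕ → S} (hp : IsChordless (G.induce S) n p) :
    IsChordless G n (fun i => (p i : W)) where
  inj hi hj h := hp.inj hi hj (Subtype.ext h)
  adj_iff hi hj := hp.adj_iff hi hj

lemma exists_isChordless {u v : W} (hS : (G.induce S).Connected) (hu : u ∈ S) (hv : v ∈ S) :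
    ∃ n p, IsChordless G n p ∧ p 0 = u ∧ p n = v ∧ ∀ i, p i ∈ S := by
  obtain ⟨p, hp₀, hpn, hp⟩ := exists_isGeodesic hS ⟨u, hu⟩ ⟨v, hv⟩
  exact ⟨_, _, hp.isChordless.coe, congrArg Subtype.val hp₀, congrArg Subtype.val hpn,
    fun i => (p i).2⟩

lemma exists_isInducedPathW_support_subset {u v : W} (hS : (G.induce S).Connected) (hu : u ∈ S)
    (hv : v ∈ S) : ∃ w : G.Walk u v, IsInducedPathW G w ∧ ∀ x ∈ w.support, x ∈ S := by
  obtain ⟨n, p, hp, rfl, rfl, hpS⟩ := exists_isChordless hS hu hv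
  obtain ⟨w, hw, hsupp⟩ := hp.exists_isInducedPathW
  refine ⟨w, hw, fun x hx => ?_⟩
  obtain ⟨i, -, rfl⟩ := (hsupp x).1 hx
  exact hpS i

lemma one_le_length_of_ne {u v : W} (w : G.Walk u v) (h : u ≠ v) : 1 ≤ w.length :=
  Nat.one_le_iff_ne_zero.2 fun hw => h (Walk.eq_of_length_eq_zero hw)

lemma two_le_length_of_ne_of_not_adj {u v : W} (w : G.Walk u v) (h : u ≠ v) (hadj : ¬G.Adj u v) :
    2 ≤ w.length := by
  have := one_le_length_of_ne w h
  have : w.length ≠ 1 := fun hw => hadj (Walk.adj_of_length_eq_one hw)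
  lia

end ChordlessPaths

section ThreePathConfigurations

variable {W : Type} {G : SimpleGraph W}

/-- `S` and `T` are disjoint and the only edge between them is `st`. -/
def TouchAt (G : SimpleGraph W) (S T : Set W) (s t : W) : Prop :=
  ∀ x ∈ S, ∀ y ∈ T, x ≠ y ∧ (G.Adj x y ↔ x = s ∧ y = t)

lemma TouchAt.symm {S T : Set W} {s t : W} (h : TouchAt G S T s t) : TouchAt G T S t s :=
  fun y hy x hx => ⟨(h x hx y hy).1.symm, by rw [G.adj_comm, (h x hx y hy).2, and_comm]⟩

/-- `G` contains no three-path configuration, that is, no theta, prism or pyramid. -/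
structure Is3PCFree (G : SimpleGraph W) : Prop where
  theta : ¬ContainsTheta G
  prism : ¬ContainsPrism G
  pyramid : ¬ContainsPyramid G

lemma containsTheta_of_links {u v : W} {M₁ M₂ M₃ : Set W} (hne : u ≠ v) (hadj : ¬G.Adj u v)
    (h₁ : Links G M₁ u v) (h₂ : Links G M₂ u v) (h₃ : Links G M₃ u v)
    (h₁₂ : Anticomplete G (M₁ \ {u, v}) (M₂ \ {u, v}))
    (h₁₃ : Anticomplete G (M₁ \ {u, v}) (M₃ \ {u, v}))
    (h₂₃ : Anticomplete G (M₂ \ {u, v}) (M₃ \ {u, v})) : ContainsTheta G := by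
  obtain ⟨p₁, hp₁, hs₁⟩ :=
    exists_isInducedPathW_support_subset h₁.connected h₁.left_mem h₁.right_mem
  obtain ⟨p₂, hp₂, hs₂⟩ :=
    exists_isInducedPathW_support_subset h₂.connected h₂.left_mem h₂.right_mem
  obtain ⟨p₃, hp₃, hs₃⟩ :=
    exists_isInducedPathW_support_subset h₃.connected h₃.left_mem h₃.right_mem
  have hlen := fun w : G.Walk u v => two_le_length_of_ne_of_not_adj w hne hadj
  refine ⟨u, v, p₁, p₂, p₃, ⟨hp₁, hp₂, hp₃⟩, ⟨hlen p₁, hlen p₂, hlen p₃⟩, ?_, ?_⟩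
  · intro w hw
    by_contra hcon
    have hw' : w ∉ ({u, v} : Set W) := hcon
    rcases hw with ⟨hx, hy⟩ | ⟨hx, hy⟩ | ⟨hx, hy⟩
    · exact (h₁₂ w ⟨hs₁ w hx, hw'⟩ w ⟨hs₂ w hy, hw'⟩).1 rfl
    · exact (h₁₃ w ⟨hs₁ w hx, hw'⟩ w ⟨hs₃ w hy, hw'⟩).1 rfl
    · exact (h₂₃ w ⟨hs₂ w hx, hw'⟩ w ⟨hs₃ w hy, hw'⟩).1 rfl
  · intro x y hxu hxv hyu hyv h
    have hx' : x ∉ ({u, v} : Set W) := not_or.2 ⟨hxu, hxv⟩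
    have hy' : y ∉ ({u, v} : Set W) := not_or.2 ⟨hyu, hyv⟩
    rcases h with ⟨hx, hy⟩ | ⟨hx, hy⟩ | ⟨hx, hy⟩
    · exact (h₁₂ x ⟨hs₁ x hx, hx'⟩ y ⟨hs₂ y hy, hy'⟩).2
    · exact (h₁₃ x ⟨hs₁ x hx, hx'⟩ y ⟨hs₃ y hy, hy'⟩).2
    · exact (h₂₃ x ⟨hs₂ x hx, hx'⟩ y ⟨hs₃ y hy, hy'⟩).2

lemma containsPyramid_of_links {u t₁ t₂ t₃ : W} {M₁ M₂ M₃ : Set W}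
    (h₁ : Links G M₁ u t₁) (h₂ : Links G M₂ u t₂) (h₃ : Links G M₃ u t₃)
    (hu₁ : u ≠ t₁) (hu₂ : u ≠ t₂) (hu₃ : u ≠ t₃)
    (hadj : (¬G.Adj u t₁ ∧ ¬G.Adj u t₂) ∨ (¬G.Adj u t₁ ∧ ¬G.Adj u t₃) ∨
      (¬G.Adj u t₂ ∧ ¬G.Adj u t₃))
    (h₁₂ : TouchAt G (M₁ \ {u}) (M₂ \ {u}) t₁ t₂) (h₁₃ : TouchAt G (M₁ \ {u}) (M₃ \ {u}) t₁ t₃)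
    (h₂₃ : TouchAt G (M₂ \ {u}) (M₃ \ {u}) t₂ t₃) : ContainsPyramid G := by
  obtain ⟨p₁, hp₁, hs₁⟩ :=
    exists_isInducedPathW_support_subset h₁.connected h₁.left_mem h₁.right_mem
  obtain ⟨p₂, hp₂, hs₂⟩ :=
    exists_isInducedPathW_support_subset h₂.connected h₂.left_mem h₂.right_mem
  obtain ⟨p₃, hp₃, hs₃⟩ :=
    exists_isInducedPathW_support_subset h₃.connected h₃.left_mem h₃.right_mem
  refine ⟨u, t₁, t₂, t₃, p₁, p₂, p₃, ⟨hp₁, hp₂, hp₃⟩, ⟨one_le_length_of_ne p₁ hu₁,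
    one_le_length_of_ne p₂ hu₂, one_le_length_of_ne p₃ hu₃⟩, ?_, ⟨?_, ?_, ?_⟩, ?_, ?_, ?_, ?_⟩
  · exact hadj.imp
      (And.imp (two_le_length_of_ne_of_not_adj p₁ hu₁) (two_le_length_of_ne_of_not_adj p₂ hu₂))
      (Or.imp
        (And.imp (two_le_length_of_ne_of_not_adj p₁ hu₁) (two_le_length_of_ne_of_not_adj p₃ hu₃))
        (And.imp (two_le_length_of_ne_of_not_adj p₂ hu₂) (two_le_length_of_ne_of_not_adj p₃ hu₃)))
  · exact (h₁₂ t₁ ⟨h₁.right_mem, hu₁.symm⟩ t₂ ⟨h₂.right_mem, hu₂.symm⟩).2.2 ⟨rfl, rfl⟩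
  · exact (h₂₃ t₂ ⟨h₂.right_mem, hu₂.symm⟩ t₃ ⟨h₃.right_mem, hu₃.symm⟩).2.2 ⟨rfl, rfl⟩
  · exact (h₁₃ t₁ ⟨h₁.right_mem, hu₁.symm⟩ t₃ ⟨h₃.right_mem, hu₃.symm⟩).2.2 ⟨rfl, rfl⟩
  · intro w hw
    by_contra hwu
    rcases hw with ⟨hx, hy⟩ | ⟨hx, hy⟩ | ⟨hx, hy⟩
    · exact (h₁₂ w ⟨hs₁ w hx, hwu⟩ w ⟨hs₂ w hy, hwu⟩).1 rfl
    · exact (h₁₃ w ⟨hs₁ w hx, hwu⟩ w ⟨hs₃ w hy, hwu⟩).1 rfl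
    · exact (h₂₃ w ⟨hs₂ w hx, hwu⟩ w ⟨hs₃ w hy, hwu⟩).1 rfl
  · exact fun x y hx hy hxu hyu => (h₁₂ x ⟨hs₁ x hx, hxu⟩ y ⟨hs₂ y hy, hyu⟩).2.1
  · exact fun x y hx hy hxu hyu => (h₁₃ x ⟨hs₁ x hx, hxu⟩ y ⟨hs₃ y hy, hyu⟩).2.1
  · exact fun x y hx hy hxu hyu => (h₂₃ x ⟨hs₂ x hx, hxu⟩ y ⟨hs₃ y hy, hyu⟩).2.1

lemma containsPrism_of_links {s₁ s₂ s₃ t₁ t₂ t₃ : W} {M₁ M₂ M₃ : Set W}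
    (h₁ : Links G M₁ s₁ t₁) (h₂ : Links G M₂ s₂ t₂) (h₃ : Links G M₃ s₃ t₃)
    (hne₁ : s₁ ≠ t₁) (hne₂ : s₂ ≠ t₂) (hne₃ : s₃ ≠ t₃)
    (hs : G.Adj s₁ s₂ ∧ G.Adj s₂ s₃ ∧ G.Adj s₁ s₃) (ht : G.Adj t₁ t₂ ∧ G.Adj t₂ t₃ ∧ G.Adj t₁ t₃)
    (h₁₂ : ∀ x ∈ M₁, ∀ y ∈ M₂, x ≠ y ∧ (G.Adj x y → (x = s₁ ∧ y = s₂) ∨ (x = t₁ ∧ y = t₂)))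
    (h₁₃ : ∀ x ∈ M₁, ∀ y ∈ M₃, x ≠ y ∧ (G.Adj x y → (x = s₁ ∧ y = s₃) ∨ (x = t₁ ∧ y = t₃)))
    (h₂₃ : ∀ x ∈ M₂, ∀ y ∈ M₃, x ≠ y ∧ (G.Adj x y → (x = s₂ ∧ y = s₃) ∨ (x = t₂ ∧ y = t₃))) :
    ContainsPrism G := by
  obtain ⟨p₁, hp₁, hs₁⟩ :=
    exists_isInducedPathW_support_subset h₁.connected h₁.left_mem h₁.right_mem
  obtain ⟨p₂, hp₂, hs₂⟩ :=
    exists_isInducedPathW_support_subset h₂.connected h₂.left_mem h₂.right_mem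
  obtain ⟨p₃, hp₃, hs₃⟩ :=
    exists_isInducedPathW_support_subset h₃.connected h₃.left_mem h₃.right_mem
  refine ⟨s₁, t₁, s₂, t₂, s₃, t₃, p₁, p₂, p₃, ⟨hp₁, hp₂, hp₃⟩, ⟨one_le_length_of_ne p₁ hne₁,
    one_le_length_of_ne p₂ hne₂, one_le_length_of_ne p₃ hne₃⟩, hs, ht, fun w => ⟨?_, ?_, ?_⟩,
    fun x y hx hy => (h₁₂ x (hs₁ x hx) y (hs₂ y hy)).2,
    fun x y hx hy => (h₁₃ x (hs₁ x hx) y (hs₃ y hy)).2,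
    fun x y hx hy => (h₂₃ x (hs₂ x hx) y (hs₃ y hy)).2⟩
  · exact fun ⟨hx, hy⟩ => (h₁₂ w (hs₁ w hx) w (hs₂ w hy)).1 rfl
  · exact fun ⟨hx, hy⟩ => (h₁₃ w (hs₁ w hx) w (hs₃ w hy)).1 rfl
  · exact fun ⟨hx, hy⟩ => (h₂₃ w (hs₂ w hx) w (hs₃ w hy)).1 rfl

end ThreePathConfigurations

section Tripods

variable {W : Type} {G : SimpleGraph W} {X : Set W} {a b z : W}

/-- A *claw tripod* through `X`: three connected legs join the center `u`, a vertex of `X` or one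
of the feet `a`, `b`, `z`, to the three feet. Besides `u` and its foot a leg lies in `X`, and the
legs are pairwise anticomplete apart from `u`. -/
def IsClaw (G : SimpleGraph W) (X : Set W) (a b z u : W) : Prop :=
  (u ∈ X ∨ u = a ∨ u = b ∨ u = z) ∧ ∃ L M N : Set W,
    (Links G L u a ∧ L \ {u} ⊆ insert a X) ∧ (Links G M u b ∧ M \ {u} ⊆ insert b X) ∧
    (Links G N u z ∧ N \ {u} ⊆ insert z X) ∧ Anticomplete G (L \ {u}) (M \ {u}) ∧
    Anticomplete G (L \ {u}) (N \ {u}) ∧ Anticomplete G (M \ {u}) (N \ {u})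

/-- A *triangle tripod* through `X`: three pairwise disjoint connected legs join the vertices of the
triangle `str` to the feet `a`, `b`, `z`. Besides its foot a leg lies in `X`, and the only edges
between the legs are those of the triangle. -/
def IsTriangle (G : SimpleGraph W) (X : Set W) (a b z s t r : W) : Prop :=
  ∃ L M N : Set W, (Links G L s a ∧ L ⊆ insert a X) ∧ (Links G M t b ∧ M ⊆ insert b X) ∧
    (Links G N r z ∧ N ⊆ insert z X) ∧
    TouchAt G L M s t ∧ TouchAt G L N s r ∧ TouchAt G M N t r

lemma IsClaw.swap_left {u : W} (h : IsClaw G X a b z u) : IsClaw G X b a z u := by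
  obtain ⟨hu, L, M, N, hL, hM, hN, hLM, hLN, hMN⟩ := h
  exact ⟨by tauto, M, L, N, hM, hL, hN, hLM.symm, hMN, hLN⟩

lemma IsClaw.swap_right {u : W} (h : IsClaw G X a b z u) : IsClaw G X a z b u := by
  obtain ⟨hu, L, M, N, hL, hM, hN, hLM, hLN, hMN⟩ := h
  exact ⟨by tauto, L, N, M, hL, hN, hM, hLN, hLM, hMN.symm⟩

lemma IsTriangle.swap_left {s t r : W} (h : IsTriangle G X a b z s t r) :
    IsTriangle G X b a z t s r := by
  obtain ⟨L, M, N, hL, hM, hN, hLM, hLN, hMN⟩ := h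
  exact ⟨M, L, N, hM, hL, hN, hLM.symm, hMN, hLN⟩

lemma IsTriangle.swap_right {s t r : W} (h : IsTriangle G X a b z s t r) :
    IsTriangle G X a z b s r t := by
  obtain ⟨L, M, N, hL, hM, hN, hLM, hLN, hMN⟩ := h
  exact ⟨L, N, M, hL, hN, hM, hLN, hLM, hMN.symm⟩

section Connector

variable {n : ℕ} {p : ℕ → W} {q : W} {Q : Set W}

lemma IsConnector.anticomplete_diff_tip {P : Set W} (hQ : IsConnector G P z q Q) :
    Anticomplete G P (Q \ {q}) :=
  fun x hx y hy =>
    ⟨fun h => hQ.disjoint y hy.1 (h ▸ hx), fun h => hy.2 (hQ.eq_tip y hy.1 x hx h.symm)⟩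

lemma isClaw_of_two_adj (hp : IsChordlessThrough G X n p) (hQX : Q ⊆ insert z X)
    (hQ : IsConnector G (p '' Set.Icc 0 n) z q Q) {i j : ℕ} (hij : i + 2 ≤ j) (hj : j ≤ n)
    (hqi : G.Adj q (p i)) (hqj : G.Adj q (p j)) : IsClaw G X (p 0) (p n) z q := by
  have hqX : q ∈ insert z X := hQX hQ.tip_mem
  have hdiff : ∀ S : Set W, insert q S \ {q} ⊆ S := fun S => by simp
  have hfar : ∀ k l, l ≤ n → Anticomplete G (p '' Set.Icc k l) (Q \ {q}) := fun k l hl =>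
    hQ.anticomplete_diff_tip.mono (Set.image_mono (Set.Icc_subset_Icc k.zero_le hl)) subset_rfl
  refine ⟨hqX.elim (fun h => .inr (.inr (.inr h))) .inl, insert q (p '' Set.Icc 0 i),
    insert q (p '' Set.Icc j n), Q, ⟨?_, ?_⟩, ⟨?_, ?_⟩, ⟨?_, ?_⟩, ?_, ?_, ?_⟩
  · exact (hp.links_segment i.zero_le (by lia)).symm.insert hqi
  · exact (hdiff _).trans (hp.initial_segment_subset (by lia))
  · exact (hp.links_segment hj le_rfl).insert hqj
  · exact (hdiff _).trans (hp.final_segment_subset (by lia))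
  · exact ⟨hQ.connected, hQ.tip_mem, hQ.start_mem⟩
  · exact Set.sdiff_subset.trans hQX
  · exact (hp.anticomplete_segments hij le_rfl).mono (hdiff _) (hdiff _)
  · exact (hfar 0 i (by lia)).mono (hdiff _) subset_rfl
  · exact (hfar j n le_rfl).mono (hdiff _) subset_rfl

lemma isTriangle_of_consecutive_adj (hp : IsChordlessThrough G X n p) (hQX : Q ⊆ insert z X)
    (hQ : IsConnector G (p '' Set.Icc 0 n) z q Q) {i : ℕ} (hi : i + 1 ≤ n)
    (hqp : ∀ k ≤ n, G.Adj q (p k) ↔ k = i ∨ k = i + 1) :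
    IsTriangle G X (p 0) (p n) z (p i) (p (i + 1)) q := by
  have htouch : ∀ k l m, l ≤ n → m ≤ n → (∀ x, k ≤ x → x ≤ l → ((x = i ∨ x = i + 1) ↔ x = m)) →
      TouchAt G (p '' Set.Icc k l) Q (p m) q := by
    rintro k l m hl hm hx _ ⟨x, ⟨hkx, hxl⟩, rfl⟩ y hy
    have hxP : p x ∈ p '' Set.Icc 0 n := ⟨x, ⟨x.zero_le, hxl.trans hl⟩, rfl⟩
    refine ⟨fun h => hQ.disjoint y hy (h ▸ hxP), fun h => ?_, ?_⟩
    · obtain rfl := hQ.eq_tip y hy _ hxP h.symm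
      exact ⟨by rw [(hx x hkx hxl).1 ((hqp x (by lia)).1 h.symm)], rfl⟩
    · rintro ⟨hxm, rfl⟩
      obtain rfl := hp.inj (by lia) hm hxm
      exact ((hqp x (by lia)).2 ((hx x hkx hxl).2 rfl)).symm
  refine ⟨p '' Set.Icc 0 i, p '' Set.Icc (i + 1) n, Q,
    ⟨(hp.links_segment i.zero_le (by lia)).symm, hp.initial_segment_subset (by lia)⟩,
    ⟨hp.links_segment hi le_rfl, hp.final_segment_subset (by lia)⟩,
    ⟨⟨hQ.connected, hQ.tip_mem, hQ.start_mem⟩, hQX⟩, ?_,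
    htouch 0 i i (by lia) (by lia) (by lia), htouch (i + 1) n (i + 1) le_rfl hi (by lia)⟩
  rintro _ ⟨x, ⟨-, hx⟩, rfl⟩ _ ⟨y, ⟨hy, hyn⟩, rfl⟩
  rw [Ne, hp.eq_iff (by lia) hyn, hp.adj_iff (by lia) hyn, hp.eq_iff (by lia) (by lia),
    hp.eq_iff hyn hi]
  lia

lemma isClaw_of_unique_adj (hp : IsChordlessThrough G X n p) (hQX : Q ⊆ insert z X)
    (hQ : IsConnector G (p '' Set.Icc 0 n) z q Q) {i : ℕ} (hi : i ≤ n)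
    (hqp : ∀ k ≤ n, G.Adj q (p k) ↔ k = i) : IsClaw G X (p 0) (p n) z (p i) := by
  have hleft : p '' Set.Icc 0 i \ {p i} ⊆ p '' Set.Ico 0 i := by
    rintro _ ⟨⟨x, ⟨hx₀, hx⟩, rfl⟩, hne⟩
    exact ⟨x, ⟨hx₀, hx.lt_of_ne fun h => hne (h ▸ rfl)⟩, rfl⟩
  have hright : p '' Set.Icc i n \ {p i} ⊆ p '' Set.Ioc i n := by
    rintro _ ⟨⟨x, ⟨hx, hxn⟩, rfl⟩, hne⟩
    exact ⟨x, ⟨hx.lt_of_ne fun h => hne (h ▸ rfl), hxn⟩, rfl⟩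
  have hQdiff : insert (p i) Q \ {p i} ⊆ Q := by simp
  have hfar : ∀ I ⊆ Set.Icc 0 n, i ∉ I → Anticomplete G (p '' I) Q := by
    rintro I hI hiI _ ⟨x, hx, rfl⟩ y hy
    have hxP : p x ∈ p '' Set.Icc 0 n := ⟨x, hI hx, rfl⟩
    refine ⟨fun h => hQ.disjoint y hy (h ▸ hxP), fun h => hiI ?_⟩
    obtain rfl := hQ.eq_tip y hy _ hxP h.symm
    exact (hqp x (hI hx).2).1 h.symm ▸ hx
  refine ⟨?_, p '' Set.Icc 0 i, p '' Set.Icc i n, insert (p i) Q,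
    ⟨(hp.links_segment i.zero_le hi).symm, ?_⟩, ⟨hp.links_segment hi le_rfl, ?_⟩,
    ⟨Links.insert ⟨hQ.connected, hQ.tip_mem, hQ.start_mem⟩ ((hqp i hi).2 rfl).symm,
      hQdiff.trans hQX⟩, ?_, ?_, ?_⟩
  · rcases i.eq_zero_or_pos with rfl | h₀
    · exact .inr (.inl rfl)
    · exact hi.eq_or_lt.elim (fun h => .inr (.inr (.inl (h ▸ rfl)))) fun h => .inl (hp.mem h₀ h)
  · rintro x hx
    obtain ⟨k, hk, rfl⟩ := hleft hx
    exact hp.initial_segment_subset (hk.2.trans_le hi) ⟨k, ⟨k.zero_le, le_rfl⟩, rfl⟩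
  · rintro x hx
    obtain ⟨k, hk, rfl⟩ := hright hx
    exact hp.final_segment_subset (i.zero_le.trans_lt hk.1) ⟨k, ⟨le_rfl, hk.2⟩, rfl⟩
  · refine Anticomplete.mono ?_ hleft hright
    rintro _ ⟨x, hx, rfl⟩ _ ⟨y, hy, rfl⟩
    rw [Set.mem_Ico] at hx
    rw [Set.mem_Ioc] at hy
    rw [Ne, hp.eq_iff (by lia) hy.2, hp.adj_iff (by lia) hy.2]
    lia
  · exact (hfar _ (fun x hx => ⟨hx.1, hx.2.le.trans hi⟩) (by simp)).mono hleft hQdiff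
  · exact (hfar _ (fun x hx => ⟨x.zero_le, hx.2⟩) (by simp)).mono hright hQdiff

lemma exists_first_last {P : ℕ → Prop} (h : ∃ k ≤ n, P k) :
    ∃ i j, i ≤ j ∧ j ≤ n ∧ P i ∧ P j ∧ ∀ k ≤ n, P k → i ≤ k ∧ k ≤ j := by
  have hfin : {k | k ≤ n ∧ P k}.Finite := (Set.finite_Iic n).subset fun k hk => hk.1
  obtain ⟨i, hi, hmin⟩ := Set.exists_min_image _ id hfin h
  obtain ⟨j, hj, hmax⟩ := Set.exists_max_image _ id hfin h
  exact ⟨i, j, hmin j hj, hj.1, hi.2, hj.2, fun k hk hPk => ⟨hmin k ⟨hk, hPk⟩, hmax k ⟨hk, hPk⟩⟩⟩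

lemma isClaw_or_isTriangle_of_isConnector (hp : IsChordlessThrough G X n p) (hQX : Q ⊆ insert z X)
    (hQ : IsConnector G (p '' Set.Icc 0 n) z q Q) :
    (∃ i j, i + 2 ≤ j ∧ j ≤ n ∧ G.Adj q (p i) ∧ G.Adj q (p j) ∧
      (∀ k ≤ n, G.Adj q (p k) → i ≤ k ∧ k ≤ j) ∧ IsClaw G X (p 0) (p n) z q) ∨
    (∃ i, i + 1 ≤ n ∧ (∀ k ≤ n, G.Adj q (p k) ↔ k = i ∨ k = i + 1) ∧
      IsTriangle G X (p 0) (p n) z (p i) (p (i + 1)) q) ∨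
    ∃ i ≤ n, (∀ k ≤ n, G.Adj q (p k) ↔ k = i) ∧ IsClaw G X (p 0) (p n) z (p i) := by
  obtain ⟨_, ⟨k, hk, rfl⟩, hqk⟩ := hQ.exists_adj
  obtain ⟨i, j, hij, hj, hqi, hqj, hbd⟩ :=
    exists_first_last (P := fun k => G.Adj q (p k)) ⟨k, hk.2, hqk⟩
  obtain hij' | rfl | rfl : i + 2 ≤ j ∨ j = i + 1 ∨ j = i := by lia
  · exact .inl ⟨i, j, hij', hj, hqi, hqj, hbd, isClaw_of_two_adj hp hQX hQ hij' hj hqi hqj⟩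
  · have hqp : ∀ k ≤ n, G.Adj q (p k) ↔ k = i ∨ k = i + 1 := fun k hk =>
      ⟨fun h => by have := hbd k hk h; lia, by rintro (rfl | rfl) <;> assumption⟩
    exact .inr (.inl ⟨i, hj, hqp, isTriangle_of_consecutive_adj hp hQX hQ hj hqp⟩)
  · have hqp : ∀ k ≤ n, G.Adj q (p k) ↔ k = j := fun k hk =>
      ⟨fun h => by have := hbd k hk h; lia, by rintro rfl; exact hqj⟩
    exact .inr (.inr ⟨j, hj, hqp, isClaw_of_unique_adj hp hQX hQ hj hqp⟩)

end Connector

end Tripods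

section Sides

variable {W : Type} {G : SimpleGraph W} {A B C X : Set W} {a b z : W}

lemma exists_isChordlessThrough (hX : (G.induce X).Connected) (hab : a ≠ b) (hadj : ¬G.Adj a b)
    (ha : ∃ x ∈ X, G.Adj a x) (hb : ∃ x ∈ X, G.Adj b x) :
    ∃ n p, IsChordlessThrough G X n p ∧ p 0 = a ∧ p n = b ∧ 2 ≤ n := by
  obtain ⟨x, hx, hax⟩ := ha
  obtain ⟨y, hy, hby⟩ := hb
  obtain ⟨n, p, hp, rfl, rfl, hpX⟩ := exists_isChordless
    (connected_induce_insert (connected_induce_insert hX hy hby) (Set.mem_insert_of_mem _ hx) hax)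
    (Set.mem_insert _ _) (Set.mem_insert_of_mem _ (Set.mem_insert _ _))
  refine ⟨n, p, ⟨hp, fun {i} hi hin => ?_⟩, rfl, rfl, ?_⟩
  · rcases hpX i with h | h | h
    · exact absurd (hp.inj hin.le n.zero_le h) hi.ne'
    · exact absurd (hp.inj hin.le le_rfl h) hin.ne
    · exact h
  · have : n ≠ 0 := by rintro rfl; exact hab rfl
    have : n ≠ 1 := by rintro rfl; exact hadj (hp.adj_succ le_rfl)
    lia

/-- `X` is a connected set disjoint from `C` in which every vertex of `C` has a neighbor. -/
structure Attached (G : SimpleGraph W) (C X : Set W) : Prop where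
  connected : (G.induce X).Connected
  disjoint : ∀ x ∈ X, x ∉ C
  exists_adj : ∀ c ∈ C, ∃ x ∈ X, G.Adj c x

lemma Attached.links (hX : Attached G C X) (ha : a ∈ C) (hb : b ∈ C) :
    Links G (insert a (insert b X)) a b := by
  obtain ⟨x, hx, hax⟩ := hX.exists_adj a ha
  obtain ⟨y, hy, hby⟩ := hX.exists_adj b hb
  exact ⟨connected_induce_insert (connected_induce_insert hX.connected hy hby)
    (Set.mem_insert_of_mem _ hx) hax, Set.mem_insert _ _,
    Set.mem_insert_of_mem _ (Set.mem_insert _ _)⟩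

lemma Attached.exists_isConnector (hX : Attached G C X) {n : ℕ} {p : ℕ → W} (hn : 2 ≤ n)
    (hp : IsChordlessThrough G X n p) (hz : z ∈ C) (h₀ : z ≠ p 0) (hzn : z ≠ p n) :
    ∃ q, ∃ Q ⊆ insert z X, IsConnector G (p '' Set.Icc 0 n) z q Q := by
  obtain ⟨x, hx, hzx⟩ := hX.exists_adj z hz
  refine _root_.exists_isConnector (connected_induce_insert hX.connected hx hzx)
    (Set.mem_insert z X) ?_ ?_
  · rintro ⟨i, ⟨-, hi⟩, rfl⟩
    have hi₀ : 0 < i := Nat.pos_of_ne_zero fun h => h₀ (h ▸ rfl)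
    exact hX.disjoint _ (hp.mem hi₀ (hi.lt_of_ne fun h => hzn (h ▸ rfl))) hz
  · exact ⟨p 1, Set.mem_insert_of_mem _ (hp.mem one_pos (by lia)), 1, ⟨zero_le_one, by lia⟩, rfl⟩

lemma Attached.exists_tripod (hX : Attached G C X) (hC : ∀ x ∈ C, ∀ y ∈ C, ¬G.Adj x y)
    (ha : a ∈ C) (hb : b ∈ C) (hz : z ∈ C) (hab : a ≠ b) (haz : a ≠ z) (hbz : b ≠ z) :
    (∃ u, IsClaw G X a b z u) ∨ ∃ s t r, IsTriangle G X a b z s t r := by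
  obtain ⟨n, p, hp, rfl, rfl, hn⟩ := exists_isChordlessThrough hX.connected hab (hC a ha b hb)
    (hX.exists_adj a ha) (hX.exists_adj b hb)
  obtain ⟨q, Q, hQX, hQ⟩ := hX.exists_isConnector hn hp hz haz.symm hbz.symm
  rcases isClaw_or_isTriangle_of_isConnector hp hQX hQ with
    ⟨i, j, -, -, -, -, -, h⟩ | ⟨i, -, -, h⟩ | ⟨i, -, -, h⟩
  · exact .inl ⟨q, h⟩
  · exact .inr ⟨_, _, _, h⟩
  · exact .inl ⟨_, h⟩

/-- `A` and `B` are two anticomplete sets attached to the independent set `C`, in a graph without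
three-path configurations. -/
structure Sides (G : SimpleGraph W) (C A B : Set W) : Prop where
  left : Attached G C A
  right : Attached G C B
  anticomplete : Anticomplete G A B
  indep : ∀ x ∈ C, ∀ y ∈ C, ¬G.Adj x y
  free : Is3PCFree G

lemma Sides.symm (h : Sides G C A B) : Sides G C B A :=
  ⟨h.right, h.left, h.anticomplete.symm, h.indep, h.free⟩

lemma Sides.forall_union (h : Sides G C A B) {R : W → W → Prop}
    (hR : ∀ x y, x ≠ y → ¬G.Adj x y → R x y) {L₁ L₂ M₁ M₂ : Set W}
    (hL₁ : L₁ ⊆ insert a A) (hL₂ : L₂ ⊆ insert b A) (hM₁ : M₁ ⊆ insert a B) (hM₂ : M₂ ⊆ insert b B)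
    (ha : a ∈ L₁ ↔ a ∈ M₁) (hb : b ∈ L₂ ↔ b ∈ M₂)
    (hL : ∀ x ∈ L₁, ∀ y ∈ L₂, R x y) (hM : ∀ x ∈ M₁, ∀ y ∈ M₂, R x y) :
    ∀ x ∈ L₁ ∪ M₁, ∀ y ∈ L₂ ∪ M₂, R x y := by
  have hAB : ∀ x y, x ∈ A → y ∈ B → R x y ∧ R y x := fun x y hx hy =>
    ⟨hR x y (h.anticomplete x hx y hy).1 (h.anticomplete x hx y hy).2,
      hR y x (h.anticomplete.symm y hy x hx).1 (h.anticomplete.symm y hy x hx).2⟩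
  rintro x (hx | hx) y (hy | hy)
  · exact hL x hx y hy
  · rcases hL₁ hx with rfl | hxA
    · exact hM x (ha.1 hx) y hy
    rcases hM₂ hy with rfl | hyB
    · exact hL x hx y (hb.2 hy)
    exact (hAB x y hxA hyB).1
  · rcases hM₁ hx with rfl | hxB
    · exact hL x (ha.2 hx) y hy
    rcases hL₂ hy with rfl | hyA
    · exact hM x hx y (hb.1 hy)
    exact (hAB y x hyA hxB).2
  · exact hM x hx y hy

lemma Sides.eq_or_adj_of_isClaw_of_isClaw (h : Sides G C A B) {u v : W}
    (hu : IsClaw G A a b z u) (hv : IsClaw G B a b z v) : u = v ∨ G.Adj u v := by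
  obtain ⟨-, L₁, L₂, L₃, ⟨hL₁, hL₁A⟩, ⟨hL₂, hL₂A⟩, ⟨hL₃, hL₃A⟩, hL₁₂, hL₁₃, hL₂₃⟩ := hu
  obtain ⟨-, M₁, M₂, M₃, ⟨hM₁, hM₁B⟩, ⟨hM₂, hM₂B⟩, ⟨hM₃, hM₃B⟩, hM₁₂, hM₁₃, hM₂₃⟩ := hv
  by_contra! hcon
  have hl : ∀ T : Set W, T \ {u, v} ⊆ T \ {u} := fun T => Set.sdiff_subset_sdiff_right (by simp)
  have hr : ∀ T : Set W, T \ {u, v} ⊆ T \ {v} := fun T => Set.sdiff_subset_sdiff_right (by simp)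
  have hglue : ∀ {c d : W} {L M L' M' : Set W}, Links G L u c → Links G M v c → Links G L' u d →
      Links G M' v d → L \ {u} ⊆ insert c A → M \ {v} ⊆ insert c B → L' \ {u} ⊆ insert d A →
      M' \ {v} ⊆ insert d B → Anticomplete G (L \ {u}) (L' \ {u}) →
      Anticomplete G (M \ {v}) (M' \ {v}) →
      Anticomplete G ((L ∪ M) \ {u, v}) ((L' ∪ M') \ {u, v}) := by
    intro c d L M L' M' hL hM hL' hM' hLA hMB hLA' hMB' hLL' hMM'
    rw [Set.union_sdiff_distrib, Set.union_sdiff_distrib]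
    exact h.forall_union (R := fun x y => x ≠ y ∧ ¬G.Adj x y) (fun _ _ => And.intro)
      ((hl L).trans hLA) ((hl L').trans hLA') ((hr M).trans hMB) ((hr M').trans hMB')
      (and_congr_left' (iff_of_true hL.right_mem hM.right_mem))
      (and_congr_left' (iff_of_true hL'.right_mem hM'.right_mem))
      (hLL'.mono (hl L) (hl L')) (hMM'.mono (hr M) (hr M'))
  exact h.free.theta <| containsTheta_of_links hcon.1 hcon.2
    (hL₁.trans hM₁.symm) (hL₂.trans hM₂.symm) (hL₃.trans hM₃.symm)
    (hglue hL₁ hM₁ hL₂ hM₂ hL₁A hM₁B hL₂A hM₂B hL₁₂ hM₁₂)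
    (hglue hL₁ hM₁ hL₃ hM₃ hL₁A hM₁B hL₃A hM₃B hL₁₃ hM₁₃)
    (hglue hL₂ hM₂ hL₃ hM₃ hL₂A hM₂B hL₃A hM₃B hL₂₃ hM₂₃)

lemma Sides.not_adj_and_adj_of_isTriangle (h : Sides G C A B) (ha : a ∈ C) (hb : b ∈ C)
    {u s t r : W} (hu : u ∈ A ∨ u = a ∨ u = b ∨ u = z) (htri : IsTriangle G B a b z s t r)
    (hus : u ≠ s) (hut : u ≠ t) (hur : u ≠ r) : ¬(G.Adj u s ∧ G.Adj u t) := by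
  rintro ⟨hadj_s, hadj_t⟩
  obtain ⟨L, M, N, ⟨hL, hLB⟩, ⟨hM, hMB⟩, ⟨hN, -⟩, hLM, hLN, -⟩ := htri
  rcases hu with hu | rfl | rfl | rfl
  · have hsa : s = a := (hLB hL.left_mem).resolve_right
      fun hs => (h.anticomplete u hu s hs).2 hadj_s
    have htb : t = b := (hMB hM.left_mem).resolve_right
      fun ht => (h.anticomplete u hu t ht).2 hadj_t
    exact h.indep a ha b hb
      (hsa ▸ htb ▸ (hLM s hL.left_mem t hM.left_mem).2.2 ⟨rfl, rfl⟩)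
  · exact hus ((hLM u hL.right_mem t hM.left_mem).2.1 hadj_t).1
  · exact hut ((hLM s hL.left_mem u hM.right_mem).2.1 hadj_s.symm).2
  · exact hur ((hLN s hL.left_mem u hN.right_mem).2.1 hadj_s.symm).2

lemma Sides.touchAt_union (h : Sides G C A B) {u c d x y : W} {L M L' M' : Set W}
    (hL : Links G L u c) (hM : Links G M x c) (hL' : Links G L' u d) (hM' : Links G M' y d)
    (hLA : L \ {u} ⊆ insert c A) (hMB : M ⊆ insert c B) (hLA' : L' \ {u} ⊆ insert d A)
    (hMB' : M' ⊆ insert d B) (hLL' : Anticomplete G (L \ {u}) (L' \ {u}))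
    (hMM' : TouchAt G M M' x y) : TouchAt G ((L ∪ M) \ {u}) ((L' ∪ M') \ {u}) x y := by
  have hxy : G.Adj x y := (hMM' x hM.left_mem y hM'.left_mem).2.2 ⟨rfl, rfl⟩
  have hR : ∀ v w, v ≠ w → ¬G.Adj v w → v ≠ w ∧ (G.Adj v w ↔ v = x ∧ w = y) :=
    fun v w hne hadj => ⟨hne, iff_of_false hadj fun ⟨hv, hw⟩ => hadj (hv ▸ hw ▸ hxy)⟩
  rw [Set.union_sdiff_distrib, Set.union_sdiff_distrib]
  exact h.forall_union hR hLA hLA' (Set.sdiff_subset.trans hMB) (Set.sdiff_subset.trans hMB')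
    (and_congr_left' (iff_of_true hL.right_mem hM.right_mem))
    (and_congr_left' (iff_of_true hL'.right_mem hM'.right_mem))
    (fun v hv w hw => hR v w (hLL' v hv w hw).1 (hLL' v hv w hw).2)
    (fun v hv w hw => hMM' v hv.1 w hw.1)

lemma Sides.eq_of_isClaw_of_isTriangle (h : Sides G C A B) (ha : a ∈ C) (hb : b ∈ C) (hz : z ∈ C)
    {u s t r : W} (hu : IsClaw G A a b z u) (htri : IsTriangle G B a b z s t r) :
    u = s ∨ u = t ∨ u = r := by
  by_contra! hcon
  obtain ⟨hus, hut, hur⟩ := hcon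
  have hst := h.not_adj_and_adj_of_isTriangle ha hb hu.1 htri hus hut hur
  have hsr := h.not_adj_and_adj_of_isTriangle ha hz hu.swap_right.1 htri.swap_right hus hur hut
  have htr := h.not_adj_and_adj_of_isTriangle hb hz hu.swap_left.swap_right.1
    htri.swap_left.swap_right hut hur hus
  obtain ⟨-, L₁, L₂, L₃, ⟨hL₁, hL₁A⟩, ⟨hL₂, hL₂A⟩, ⟨hL₃, hL₃A⟩, hL₁₂, hL₁₃, hL₂₃⟩ := hu
  obtain ⟨M₁, M₂, M₃, ⟨hM₁, hM₁B⟩, ⟨hM₂, hM₂B⟩, ⟨hM₃, hM₃B⟩, hM₁₂, hM₁₃, hM₂₃⟩ := htri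
  exact h.free.pyramid <| containsPyramid_of_links
    (hL₁.trans hM₁.symm) (hL₂.trans hM₂.symm) (hL₃.trans hM₃.symm) hus hut hur (by tauto)
    (h.touchAt_union hL₁ hM₁ hL₂ hM₂ hL₁A hM₁B hL₂A hM₂B hL₁₂ hM₁₂)
    (h.touchAt_union hL₁ hM₁ hL₃ hM₃ hL₁A hM₁B hL₃A hM₃B hL₁₃ hM₁₃)
    (h.touchAt_union hL₂ hM₂ hL₃ hM₃ hL₂A hM₂B hL₃A hM₃B hL₂₃ hM₂₃)

lemma Sides.eq_of_isTriangle_of_isTriangle (h : Sides G C A B) {s t r s' t' r' : W}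
    (htri : IsTriangle G A a b z s t r) (htri' : IsTriangle G B a b z s' t' r') :
    s = s' ∨ t = t' ∨ r = r' := by
  obtain ⟨L₁, L₂, L₃, ⟨hL₁, hL₁A⟩, ⟨hL₂, hL₂A⟩, ⟨hL₃, hL₃A⟩, hL₁₂, hL₁₃, hL₂₃⟩ := htri
  obtain ⟨M₁, M₂, M₃, ⟨hM₁, hM₁B⟩, ⟨hM₂, hM₂B⟩, ⟨hM₃, hM₃B⟩, hM₁₂, hM₁₃, hM₂₃⟩ := htri'
  by_contra! hcon
  have hadj : ∀ {x y : W} {S T : Set W}, TouchAt G S T x y → x ∈ S → y ∈ T → G.Adj x y :=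
    fun hST hx hy => (hST _ hx _ hy).2.2 ⟨rfl, rfl⟩
  have hglue : ∀ {c d x y x' y' : W} {L M L' M' : Set W}, Links G L x c → Links G M x' c →
      Links G L' y d → Links G M' y' d → L ⊆ insert c A → M ⊆ insert c B → L' ⊆ insert d A →
      M' ⊆ insert d B → TouchAt G L L' x y → TouchAt G M M' x' y' →
      ∀ v ∈ L ∪ M, ∀ w ∈ L' ∪ M', v ≠ w ∧ (G.Adj v w → (v = x ∧ w = y) ∨ (v = x' ∧ w = y')) := by
    intro c d x y x' y' L M L' M' hL hM hL' hM' hLA hMB hLA' hMB' hLL' hMM'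
    exact h.forall_union (fun v w hne hadj => ⟨hne, fun h => absurd h hadj⟩) hLA hLA' hMB hMB'
      (iff_of_true hL.right_mem hM.right_mem) (iff_of_true hL'.right_mem hM'.right_mem)
      (fun v hv w hw => (hLL' v hv w hw).imp id fun h hvw => .inl (h.1 hvw))
      (fun v hv w hw => (hMM' v hv w hw).imp id fun h hvw => .inr (h.1 hvw))
  exact h.free.prism <| containsPrism_of_links
    (hL₁.trans hM₁.symm) (hL₂.trans hM₂.symm) (hL₃.trans hM₃.symm) hcon.1 hcon.2.1 hcon.2.2
    ⟨hadj hL₁₂ hL₁.left_mem hL₂.left_mem, hadj hL₂₃ hL₂.left_mem hL₃.left_mem,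
      hadj hL₁₃ hL₁.left_mem hL₃.left_mem⟩
    ⟨hadj hM₁₂ hM₁.left_mem hM₂.left_mem, hadj hM₂₃ hM₂.left_mem hM₃.left_mem,
      hadj hM₁₃ hM₁.left_mem hM₃.left_mem⟩
    (hglue hL₁ hM₁ hL₂ hM₂ hL₁A hM₁B hL₂A hM₂B hL₁₂ hM₁₂)
    (hglue hL₁ hM₁ hL₃ hM₃ hL₁A hM₁B hL₃A hM₃B hL₁₃ hM₁₃)
    (hglue hL₂ hM₂ hL₃ hM₃ hL₂A hM₂B hL₃A hM₃B hL₂₃ hM₂₃)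

end Sides

section MinimalSides

variable {W : Type} {G : SimpleGraph W} {A B C X : Set W} {a b z : W}

lemma Sides.notMem_right (h : Sides G C A B) {c x : W} (hc : c ∈ C) (hx : x ∈ insert c A) :
    x ∉ B := fun hxB =>
  hx.elim (fun e => h.right.disjoint x hxB (e ▸ hc)) fun hxA => (h.anticomplete x hxA x hxB).1 rfl

lemma Sides.not_isTriangle (h : Sides G C A B) (ha : a ∈ C) (hb : b ∈ C) (hz : z ∈ C)
    (hab : a ≠ b) (haz : a ≠ z) (hbz : b ≠ z) {s t r : W} (hs : s ∈ B) (ht : t ∈ B) (hr : r ∈ B) :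
    ¬IsTriangle G B a b z s t r := by
  intro htri
  rcases h.left.exists_tripod h.indep ha hb hz hab haz hbz with ⟨u, hu⟩ | ⟨s', t', r', htri'⟩
  · have huB : u ∉ B := by
      rcases hu.1 with huA | rfl | rfl | rfl
      · exact h.notMem_right ha (Set.mem_insert_of_mem _ huA)
      all_goals exact h.notMem_right ‹_› (Set.mem_insert _ _)
    rcases h.eq_of_isClaw_of_isTriangle ha hb hz hu htri with rfl | rfl | rfl <;>
      exact huB ‹_›
  · rcases id htri' with ⟨L, M, N, ⟨hL, hLA⟩, ⟨hM, hMA⟩, ⟨hN, hNA⟩, -⟩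
    rcases h.eq_of_isTriangle_of_isTriangle htri' htri with rfl | rfl | rfl
    · exact h.notMem_right ha (hLA hL.left_mem) hs
    · exact h.notMem_right hb (hMA hM.left_mem) ht
    · exact h.notMem_right hz (hNA hN.left_mem) hr

lemma Sides.exists_foot_adj_centers (h : Sides G C A B) (ha : a ∈ C) (hb : b ∈ C) (hz : z ∈ C)
    (hab : a ≠ b) (haz : a ≠ z) (hbz : b ≠ z) :
    (∀ v ∈ B, IsClaw G B a b z v → G.Adj v a) ∨ (∀ v ∈ B, IsClaw G B a b z v → G.Adj v b) ∨
      ∀ v ∈ B, IsClaw G B a b z v → G.Adj v z := by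
  rcases h.left.exists_tripod h.indep ha hb hz hab haz hbz with ⟨u, hu⟩ | ⟨s, t, r, htri⟩
  · have hadj : u ∉ B → ∀ v ∈ B, IsClaw G B a b z v → G.Adj v u := fun huB v hv hclaw =>
      ((h.eq_or_adj_of_isClaw_of_isClaw hu hclaw).resolve_left fun e => huB (e ▸ hv)).symm
    rcases hu.1 with huA | rfl | rfl | rfl
    · refine .inl fun v hv hclaw => ?_
      exact absurd (hadj (h.notMem_right ha (Set.mem_insert_of_mem _ huA)) v hv hclaw).symm
        (h.anticomplete u huA v hv).2
    · exact .inl (hadj (h.notMem_right ha (Set.mem_insert _ _)))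
    · exact .inr (.inl (hadj (h.notMem_right hb (Set.mem_insert _ _))))
    · exact .inr (.inr (hadj (h.notMem_right hz (Set.mem_insert _ _))))
  · refine .inl fun v hv hclaw => ?_
    rcases id htri with ⟨L, M, N, ⟨hL, hLA⟩, ⟨hM, hMA⟩, ⟨hN, hNA⟩, -⟩
    rcases h.symm.eq_of_isClaw_of_isTriangle ha hb hz hclaw htri with rfl | rfl | rfl
    · exact absurd hv (h.notMem_right ha (hLA hL.left_mem))
    · exact absurd hv (h.notMem_right hb (hMA hM.left_mem))
    · exact absurd hv (h.notMem_right hz (hNA hN.left_mem))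

/-- `c` is a vertex of `C` whose only neighbor in `X` is `w`. -/
structure Pendant (G : SimpleGraph W) (C X : Set W) (c w : W) : Prop where
  mem : c ∈ C
  foot_mem : w ∈ X
  adj_iff : ∀ x ∈ X, G.Adj c x ↔ x = w

lemma Pendant.adj {c w : W} (hc : Pendant G C X c w) : G.Adj c w :=
  (hc.adj_iff w hc.foot_mem).2 rfl

lemma Pendant.ne {c d v w : W} (hc : Pendant G C X c v) (hd : Pendant G C X d w) (hvw : v ≠ w) :
    c ≠ d := by
  rintro rfl
  exact hvw ((hd.adj_iff v hc.foot_mem).1 hc.adj)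

lemma exists_pendant_of_connected_diff (hmin : Minimal (Attached G C) X) {w : W} (hw : w ∈ X)
    (hconn : (G.induce (X \ {w})).Connected) : ∃ c, Pendant G C X c w := by
  by_contra! hno
  have hatt : Attached G C (X \ {w}) := by
    refine ⟨hconn, fun x hx => hmin.prop.disjoint x hx.1, fun c hc => ?_⟩
    obtain ⟨x, hx, hcx⟩ := hmin.prop.exists_adj c hc
    by_contra! hall
    have huniq : ∀ y ∈ X, G.Adj c y → y = w := fun y hy hcy =>
      by_contra fun hyw => hall y ⟨hy, hyw⟩ hcy
    exact hno c ⟨hc, hw, fun y hy => ⟨huniq y hy, fun e => e ▸ huniq x hx hcx ▸ hcx⟩⟩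
  exact (hmin.le_of_le hatt Set.sdiff_subset hw).2 rfl

lemma exists_pendant_notMem (hmin : Minimal (Attached G C) X) (hfin : X.Finite) {T : Set W}
    (hT : (G.induce T).Connected) (hTX : T ⊂ X) : ∃ c, ∃ w ∈ X \ T, Pendant G C X c w := by
  obtain ⟨w, hw, hconn⟩ := exists_connected_diff_singleton hmin.prop.connected hfin hT hTX
  obtain ⟨c, hc⟩ := exists_pendant_of_connected_diff hmin hw.1 hconn
  exact ⟨c, w, hw, hc⟩

lemma exists_maximal_connected_subset {S Y : Set W} (hY : Y.Finite) (hS : (G.induce S).Connected)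
    (hSY : S ⊆ Y) : ∃ T, S ⊆ T ∧ T ⊆ Y ∧ (G.induce T).Connected ∧
      ∀ x ∈ T, ∀ y ∈ Y, G.Adj x y → y ∈ T := by
  obtain ⟨T, hST, hT⟩ := (hY.finite_subsets.subset
    (t := {T | T ⊆ Y ∧ (G.induce T).Connected}) fun T hT => hT.1).exists_le_maximal ⟨hSY, hS⟩
  refine ⟨T, hST, hT.prop.1, hT.prop.2, fun x hx y hy hxy => ?_⟩
  exact hT.le_of_ge ⟨Set.insert_subset hy hT.prop.1, connected_induce_insert hT.prop.2 hx hxy.symm⟩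
    (Set.subset_insert y T) (Set.mem_insert y T)

lemma exists_leg_avoiding (hmin : Minimal (Attached G C) X)
    (hfin : X.Finite) {S : Set W} {r : W} (hS : (G.induce S).Connected) (hSX : S ⊆ X \ {r})
    (hr : r ∈ X) : ∃ c w, Pendant G C X c w ∧ ∃ Q ⊆ X, Links G Q r w ∧
      ∀ x ∈ S, ∀ y ∈ Q, x ≠ y ∧ (G.Adj x y → y = r) := by
  obtain ⟨T, hST, hTX, hT, hclosed⟩ :=
    exists_maximal_connected_subset (hfin.subset Set.sdiff_subset) hS hSX
  have hTX' : T ⊂ X := ⟨hTX.trans Set.sdiff_subset, fun h => (hTX (h hr)).2 rfl⟩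
  obtain ⟨c, w, hw, hc⟩ := exists_pendant_notMem hmin hfin hT hTX'
  obtain ⟨x, hx⟩ := hT.nonempty
  obtain ⟨q, Q, hQX, hQ⟩ := exists_isConnector hmin.prop.connected hw.1 hw.2 ⟨x, hTX'.1 hx, hx⟩
  have htip : q = r := by
    obtain ⟨y, hy, hqy⟩ := hQ.exists_adj
    by_contra hqr
    exact hQ.disjoint q hQ.tip_mem (hclosed y hy q ⟨hQX hQ.tip_mem, hqr⟩ hqy.symm)
  refine ⟨c, w, hc, Q, hQX,
    ⟨hQ.connected, htip ▸ hQ.tip_mem, hQ.start_mem⟩, fun y hy x hx => ⟨?_, fun hyx => ?_⟩⟩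
  · rintro rfl
    exact hQ.disjoint y hx (hST hy)
  · exact (hQ.eq_tip x hx y (hST hy) hyx.symm).trans htip

lemma TouchAt.insert_pendants {c d v w s t : W} {L M : Set W} (hLM : TouchAt G L M s t)
    (hX : Attached G C X) (hC : ∀ x ∈ C, ∀ y ∈ C, ¬G.Adj x y) (hLX : L ⊆ X) (hMX : M ⊆ X)
    (hL : Links G L s v) (hM : Links G M t w) (hc : Pendant G C X c v) (hd : Pendant G C X d w) :
    TouchAt G (insert c L) (insert d M) s t := by
  have hvw : v ≠ w := (hLM v hL.right_mem w hM.right_mem).1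
  have hst : G.Adj s t := (hLM s hL.left_mem t hM.left_mem).2.2 ⟨rfl, rfl⟩
  have hR : ∀ x y, x ≠ y → ¬G.Adj x y → x ≠ y ∧ (G.Adj x y ↔ x = s ∧ y = t) :=
    fun x y hne hadj => ⟨hne, iff_of_false hadj fun ⟨hx, hy⟩ => hadj (hx ▸ hy ▸ hst)⟩
  have hne : ∀ {e x}, e ∈ C → x ∈ X → e ≠ x := fun he hx hex => hX.disjoint _ hx (hex ▸ he)
  rintro x (rfl | hx) y (rfl | hy)
  · exact hR x y (hc.ne hd hvw) (hC x hc.mem y hd.mem)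
  · refine hR x y (hne hc.mem (hMX hy)) fun hxy => ?_
    obtain rfl := (hc.adj_iff y (hMX hy)).1 hxy
    exact (hLM y hL.right_mem y hy).1 rfl
  · refine hR x y (hne hd.mem (hLX hx)).symm fun hxy => ?_
    obtain rfl := (hd.adj_iff x (hLX hx)).1 hxy.symm
    exact (hLM x hx x hM.right_mem).1 rfl
  · exact hLM x hx y hy

lemma Sides.false_of_triangle_of_pendant (h : Sides G C A B) (hmin : Minimal (Attached G C) B)
    (hfin : B.Finite) {α ζ s t r : W} {L M : Set W} (ha : Pendant G C B a α)
    (hz : Pendant G C B z ζ) (hL : Links G L s α) (hM : Links G M t ζ) (hLB : L ⊆ B) (hMB : M ⊆ B)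
    (hr : r ∈ B) (hLM : TouchAt G L M s t) (hLr : TouchAt G L {r} s r)
    (hMr : TouchAt G M {r} t r) : False := by
  have hst : G.Adj s t := (hLM s hL.left_mem t hM.left_mem).2.2 ⟨rfl, rfl⟩
  have hS : (G.induce (insert t L ∪ M)).Connected :=
    ((hL.insert hst.symm).symm.trans hM).connected
  have hSB : insert t L ∪ M ⊆ B \ {r} := by
    have hL' : L ⊆ B \ {r} := fun x hx => ⟨hLB hx, (hLr x hx r rfl).1⟩
    have hM' : M ⊆ B \ {r} := fun x hx => ⟨hMB hx, (hMr x hx r rfl).1⟩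
    exact Set.union_subset (Set.insert_subset (hM' hM.left_mem) hL') hM'
  obtain ⟨c, w, hc, Q, hQB, hQ, hSQ⟩ := exists_leg_avoiding hmin hfin hS hSB hr
  have htouch : ∀ {K : Set W} {x : W}, K ⊆ insert t L ∪ M → TouchAt G K {r} x r →
      TouchAt G K Q x r := fun hK hKr y hy y' hy' =>
    ⟨(hSQ y (hK hy) y' hy').1, fun hadj => by
        obtain rfl := (hSQ y (hK hy) y' hy').2 hadj
        exact (hKr y hy y' rfl).2.1 hadj,
      fun ⟨hyx, hyr⟩ => hyr ▸ (hKr y hy r rfl).2.2 ⟨hyx, rfl⟩⟩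
  have hLQ := htouch ((Set.subset_insert t L).trans Set.subset_union_left) hLr
  have hMQ := htouch Set.subset_union_right hMr
  have hleg : ∀ {K : Set W} {x y c : W}, Links G K x y → Pendant G C B c y → K ⊆ B →
      Links G (insert c K) x c ∧ insert c K ⊆ insert c B := fun hK hc hKB =>
    ⟨(hK.symm.insert hc.adj).symm, Set.insert_subset_insert hKB⟩
  exact h.not_isTriangle ha.mem hz.mem hc.mem
    (ha.ne hz (hLM _ hL.right_mem _ hM.right_mem).1)
    (ha.ne hc (hLQ _ hL.right_mem _ hQ.right_mem).1)
    (hz.ne hc (hMQ _ hM.right_mem _ hQ.right_mem).1) (hLB hL.left_mem) (hMB hM.left_mem) hr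
    ⟨_, _, _, hleg hL ha hLB, hleg hM hz hMB, hleg hQ hc hQB,
      hLM.insert_pendants h.right h.indep hLB hMB hL hM ha hz,
      hLQ.insert_pendants h.right h.indep hLB hQB hL hQ ha hc,
      hMQ.insert_pendants h.right h.indep hMB hQB hM hQ hz hc⟩

end MinimalSides

section MinimalSidesArePaths

variable {W : Type} {G : SimpleGraph W} {A B C X : Set W} {a b z : W} {n : ℕ}

lemma IsChordless.cons {p : ℕ → W} (hp : IsChordless G n p) (hne : ∀ i ≤ n, a ≠ p i)
    (hadj : ∀ i ≤ n, G.Adj a (p i) ↔ i = 0) : IsChordless G (n + 1) (fun k => k.casesOn a p) where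
  inj {i j} hi hj h := by
    rcases i with - | i <;> rcases j with - | j
    · rfl
    · exact absurd h (hne j (by lia))
    · exact absurd h.symm (hne i (by lia))
    · exact congrArg (· + 1) (hp.inj (by lia) (by lia) h)
  adj_iff {i j} hi hj := by
    rcases i with - | i <;> rcases j with - | j
    · simp
    · exact (hadj j (by lia)).trans (by lia)
    · exact (G.adj_comm _ _).trans ((hadj i (by lia)).trans (by lia))
    · exact (hp.adj_iff (by lia) (by lia)).trans (by lia)

lemma IsChordless.exists_extension {p : ℕ → W} (hp : IsChordless G n p) (hpX : ∀ i ≤ n, p i ∈ X)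
    (hX : Attached G C X) (hC : ∀ x ∈ C, ∀ y ∈ C, ¬G.Adj x y) (ha : Pendant G C X a (p 0))
    (hb : Pendant G C X b (p n)) (hab : a ≠ b) : ∃ q, IsChordlessThrough G X (n + 2) q ∧
      q 0 = a ∧ q (n + 2) = b ∧ ∀ i ≤ n, q (i + 1) = p i := by
  have hne : ∀ {c i}, c ∈ C → i ≤ n → c ≠ p i := fun hc hi h => hX.disjoint _ (hpX _ hi) (h ▸ hc)
  have hap := hp.cons (a := a) (fun i => hne ha.mem) fun i hi => by
    rw [ha.adj_iff _ (hpX i hi), hp.eq_iff hi n.zero_le]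
  let r : ℕ → W := fun i => (n + 1 - i).casesOn a p
  have hbr : ∀ i, b ≠ r i ∧ (G.Adj b (r i) ↔ i = 0) := fun i => by
    rcases hm : n + 1 - i with - | m <;> simp only [r, hm]
    · exact ⟨hab.symm, iff_of_false (hC b hb.mem a ha.mem) (by lia)⟩
    · exact ⟨hne hb.mem (by lia), (hb.adj_iff _ (hpX m (by lia))).trans
        ((hp.eq_iff (by lia) le_rfl).trans (by lia))⟩
  have hbap := IsChordless.cons (p := r) hap.reverse (fun i _ => (hbr i).1)
    fun i _ => (hbr i).2
  refine ⟨_, ⟨hbap.reverse, fun {i} h₀ hin => ?_⟩, by simp [r], by simp, fun i hi => ?_⟩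
  · obtain ⟨k, hk⟩ : ∃ k, n + 1 + 1 - i = k + 1 := ⟨n + 1 - i, by lia⟩
    obtain ⟨m, hm⟩ : ∃ m, n + 1 - k = m + 1 := ⟨n - k, by lia⟩
    simpa only [hk, hm, r] using hpX m (by lia)
  · obtain ⟨k, hk⟩ : ∃ k, n + 1 + 1 - (i + 1) = k + 1 := ⟨n - i, by lia⟩
    have hm : n + 1 - k = i + 1 := by lia
    simp only [hk, hm, r]

lemma IsConnector.anticomplete_pendant {c v w : W} {P Q : Set W} (hQ : IsConnector G P z v Q)
    (hX : Attached G C X) (hC : ∀ x ∈ C, ∀ y ∈ C, ¬G.Adj x y) (hz : z ∈ C) (hQX : Q ⊆ insert z X)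
    (hc : Pendant G C X c w) (hw : w ∈ P) (hcz : c ≠ z) : Anticomplete G Q {c} := by
  rintro x hx _ rfl
  rcases hQX hx with rfl | hxX
  · exact ⟨hcz.symm, hC _ hz _ hc.mem⟩
  · exact ⟨fun e => hX.disjoint x hxX (e ▸ hc.mem),
      fun hadj => hQ.disjoint x hx ((hc.adj_iff x hxX).1 hadj.symm ▸ hw)⟩

lemma exists_eq_succ_of_anticomplete_ends {q : ℕ → W} {Q : Set W}
    (h₀ : Anticomplete G Q {q 0}) (h₁ : Anticomplete G Q {q (n + 2)}) {k : ℕ} (hk : k ≤ n + 2)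
    {w : W} (hw : w ∈ Q) (hwk : w = q k ∨ G.Adj w (q k)) : ∃ i ≤ n, k = i + 1 := by
  obtain rfl | rfl | h : k = 0 ∨ k = n + 2 ∨ 0 < k ∧ k ≤ n + 1 := by lia
  · exact absurd hwk (not_or.2 (h₀ w hw _ rfl))
  · exact absurd hwk (not_or.2 (h₁ w hw _ rfl))
  · exact ⟨k - 1, by lia, by lia⟩

lemma IsConnector.extend {p q : ℕ → W} {v : W} {Q : Set W}
    (hQ : IsConnector G (p '' Set.Icc 0 n) z v Q) (hqp : ∀ i ≤ n, q (i + 1) = p i)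
    (h₀ : Anticomplete G Q {q 0}) (h₁ : Anticomplete G Q {q (n + 2)}) :
    IsConnector G (q '' Set.Icc 0 (n + 2)) z v Q := by
  refine ⟨hQ.connected, hQ.start_mem, hQ.tip_mem, ?_, ?_, ?_⟩
  · rintro w hw ⟨k, ⟨-, hk⟩, hkw⟩
    obtain ⟨i, hi, rfl⟩ := exists_eq_succ_of_anticomplete_ends h₀ h₁ hk hw (.inl hkw.symm)
    exact hQ.disjoint w hw ⟨i, ⟨i.zero_le, hi⟩, hqp i hi ▸ hkw⟩
  · obtain ⟨-, ⟨i, ⟨-, hi⟩, rfl⟩, hadj⟩ := hQ.exists_adj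
    exact ⟨p i, ⟨i + 1, ⟨by lia, by lia⟩, hqp i hi⟩, hadj⟩
  · rintro w hw - ⟨k, ⟨-, hk⟩, rfl⟩ hadj
    obtain ⟨i, hi, rfl⟩ := exists_eq_succ_of_anticomplete_ends h₀ h₁ hk hw (.inr hadj)
    exact hQ.eq_tip w hw _ ⟨i, ⟨i.zero_le, hi⟩, rfl⟩ (hqp i hi ▸ hadj)

lemma Attached.exists_tripod_of_isConnector (hX : Attached G C X)
    (hC : ∀ x ∈ C, ∀ y ∈ C, ¬G.Adj x y) {p : ℕ → W} {v : W} {Q : Set W} (hp : IsChordless G n p)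
    (hpX : ∀ i ≤ n, p i ∈ X) (ha : Pendant G C X a (p 0)) (hb : Pendant G C X b (p n))
    (hab : a ≠ b) (hz : z ∈ C) (haz : a ≠ z) (hbz : b ≠ z) (hQX : Q ⊆ insert z X)
    (hQ : IsConnector G (p '' Set.Icc 0 n) z v Q) :
    (∃ i j, i + 2 ≤ j ∧ j ≤ n ∧ G.Adj v (p i) ∧ G.Adj v (p j) ∧
      (∀ k ≤ n, G.Adj v (p k) → i ≤ k ∧ k ≤ j) ∧ IsClaw G X a b z v) ∨
    (∃ i, i + 1 ≤ n ∧ IsTriangle G X a b z (p i) (p (i + 1)) v) ∨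
    ∃ i ≤ n, (∀ k ≤ n, G.Adj v (p k) ↔ k = i) ∧ IsClaw G X a b z (p i) := by
  obtain ⟨q, hq, rfl, rfl, hqp⟩ := hp.exists_extension hpX hX hC ha hb hab
  have hfar : ∀ {c i}, i ≤ n → Pendant G C X c (p i) → c ≠ z → Anticomplete G Q {c} :=
    fun {c i} hi hc hcz =>
      hQ.anticomplete_pendant hX hC hz hQX hc ⟨i, ⟨i.zero_le, hi⟩, rfl⟩ hcz
  have h₀ := hfar n.zero_le ha haz
  have h₁ := hfar le_rfl hb hbz
  have hQ' := hQ.extend hqp h₀ h₁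
  have hend : ∀ k ≤ n + 2, G.Adj v (q k) → ∃ i ≤ n, k = i + 1 := fun k hk hvk =>
    exists_eq_succ_of_anticomplete_ends h₀ h₁ hk hQ.tip_mem (.inr hvk)
  have hadj : ∀ k ≤ n, G.Adj v (p k) ↔ G.Adj v (q (k + 1)) := fun k hk => by rw [hqp k hk]
  rcases isClaw_or_isTriangle_of_isConnector hq hQX hQ' with
    ⟨i, j, hij, hj, hvi, hvj, hbetween, hv⟩ | ⟨i, hi, hvi, htri⟩ | ⟨i, hi, hvi, hc⟩
  · obtain ⟨i, hi, rfl⟩ := hend i (by lia) hvi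
    obtain ⟨j, hjn, rfl⟩ := hend j hj hvj
    refine .inl ⟨i, j, by lia, hjn, (hadj i hi).2 hvi, (hadj j hjn).2 hvj, fun k hk hvk => ?_, hv⟩
    have := hbetween (k + 1) (by lia) ((hadj k hk).1 hvk)
    lia
  · obtain ⟨k, hk, rfl⟩ := hend i (by lia) ((hvi i (by lia)).2 (.inl rfl))
    obtain ⟨l, hl, hkl⟩ := hend _ hi ((hvi _ hi).2 (.inr rfl))
    obtain rfl : k + 1 = l := by lia
    exact .inr (.inl ⟨k, hl, hqp k hk ▸ hqp (k + 1) hl ▸ htri⟩)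
  · obtain ⟨k, hk, rfl⟩ := hend i hi ((hvi i hi).2 rfl)
    refine .inr (.inr ⟨k, hk, fun l hl => ?_, hqp k hk ▸ hc⟩)
    rw [hadj l hl, hvi (l + 1) (by lia), Nat.add_right_cancel_iff]

lemma Sides.exists_two_adj (h : Sides G C A B) {p : ℕ → W} {w : W} (hp : IsChordless G n p)
    (hpB : ∀ i ≤ n, p i ∈ B) (ha : Pendant G C B a (p 0)) (hb : Pendant G C B b (p n))
    (hab : a ≠ b) (hz : Pendant G C B z w) (hw : ∀ i ≤ n, p i ≠ w)
    (hclaw : ∀ v ∈ B, IsClaw G B a b z v → G.Adj v z) :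
    ∃ i j, i + 2 ≤ j ∧ j ≤ n ∧ G.Adj w (p i) ∧ G.Adj w (p j) ∧
      ∀ k ≤ n, G.Adj w (p k) → i ≤ k ∧ k ≤ j := by
  have haz : a ≠ z := ha.ne hz (hw 0 n.zero_le)
  have hbz : b ≠ z := hb.ne hz (hw n le_rfl)
  obtain ⟨v, Q, hQB, hQ⟩ := exists_isConnector (P := p '' Set.Icc 0 n)
    (connected_induce_insert h.right.connected hz.foot_mem hz.adj) (Set.mem_insert z B)
    (by rintro ⟨i, ⟨-, hi⟩, rfl⟩; exact h.right.disjoint _ (hpB i hi) hz.mem)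
    ⟨p 0, Set.mem_insert_of_mem _ (hpB 0 n.zero_le), 0, ⟨le_rfl, n.zero_le⟩, rfl⟩
  have hvB : v ∈ B := by
    refine (hQB hQ.tip_mem).resolve_left ?_
    rintro rfl
    obtain ⟨-, ⟨i, ⟨-, hi⟩, rfl⟩, hadj⟩ := hQ.exists_adj
    exact hw i hi ((hz.adj_iff _ (hpB i hi)).1 hadj)
  have hfoot : ∀ u ∈ B, IsClaw G B a b z u → u = w := fun u hu hcl =>
    (hz.adj_iff u hu).1 (hclaw u hu hcl).symm
  rcases h.right.exists_tripod_of_isConnector h.indep hp hpB ha hb hab hz.mem haz hbz hQB hQ with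
    ⟨i, j, hij, hj, hvi, hvj, hbetween, hv⟩ | ⟨i, hi, htri⟩ | ⟨i, hi, -, hc⟩
  · obtain rfl := hfoot v hvB hv
    exact ⟨i, j, hij, hj, hvi, hvj, hbetween⟩
  · exact absurd htri (h.not_isTriangle ha.mem hb.mem hz.mem hab haz hbz (hpB i (by lia))
      (hpB _ hi) hvB)
  · exact absurd (hfoot _ (hpB i hi) hc) (hw i hi)

lemma Sides.exists_links_around (h : Sides G C A B) {p : ℕ → W} (hp : IsChordless G n p)
    (ha : Pendant G C B a (p 0)) (hb : Pendant G C B b (p n)) {i j : ℕ} (hi : i ≤ n) (hj : j ≤ n) :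
    ∃ M, Links G M (p i) (p j) ∧ ∀ x ∈ B, x ≠ p 0 → x ≠ p n →
      (∀ k ≤ n, k < i ∨ j < k → x ≠ p k ∧ ¬G.Adj x (p k)) →
      Anticomplete G {x} (M \ {p i, p j}) := by
  have hinit : Links G (insert a (p '' Set.Icc 0 i)) (p i) a :=
    ((hp.links_segment i.zero_le hi).insert ha.adj).symm
  have hfinal : Links G (insert b (p '' Set.Icc j n)) b (p j) :=
    (hp.links_segment hj le_rfl).symm.insert hb.adj
  refine ⟨_, (hinit.trans (h.left.links ha.mem hb.mem)).trans hfinal,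
    fun x hxB hx₀ hxn hxp => ?_⟩
  have hpend : ∀ {c w}, Pendant G C B c w → x ≠ w → x ≠ c ∧ ¬G.Adj x c := fun hc hxw =>
    ⟨fun e => h.right.disjoint x hxB (e ▸ hc.mem), fun hadj => hxw ((hc.adj_iff x hxB).1 hadj.symm)⟩
  rintro _ rfl y ⟨((rfl | ⟨k, ⟨-, hk⟩, rfl⟩) | (rfl | rfl | hyA)) | (rfl | ⟨k, ⟨hk, hkn⟩, rfl⟩), hy⟩
  · exact hpend ha hx₀
  · exact hxp k (by lia) (.inl (hk.lt_of_ne fun e => hy (.inl (e ▸ rfl))))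
  · exact hpend ha hx₀
  · exact hpend hb hxn
  · exact h.anticomplete.symm _ hxB y hyA
  · exact hpend hb hxn
  · exact hxp k hkn (.inr (hk.lt_of_ne fun e => hy (.inr (e ▸ rfl))))

lemma links_of_adj_of_adj {u v x : W} (hu : G.Adj x u) (hv : G.Adj x v) :
    Links G {v, x, u} u v :=
  ((Links.insert ⟨connected_induce_singleton _, rfl, rfl⟩ hu).insert hv.symm).symm

lemma Sides.adj_between (h : Sides G C A B) {p : ℕ → W} {w : W} {i : ℕ}
    (hp : IsChordless G n p) (hpB : ∀ i ≤ n, p i ∈ B) (ha : Pendant G C B a (p 0))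
    (hb : Pendant G C B b (p n)) (hwB : w ∈ B) (hw : ∀ i ≤ n, p i ≠ w) (hi : i + 2 ≤ n)
    (hwi : G.Adj w (p i)) (hwj : G.Adj w (p (i + 2)))
    (hbetween : ∀ k ≤ n, G.Adj w (p k) → i ≤ k ∧ k ≤ i + 2) : G.Adj w (p (i + 1)) := by
  by_contra hwm
  obtain ⟨M, hM, hanti⟩ := h.exists_links_around hp ha hb (show i ≤ n by lia) hi
  have hleg : ∀ x, ({p (i + 2), x, p i} : Set W) \ {p i, p (i + 2)} ⊆ {x} := by
    rintro x y ⟨rfl | rfl | rfl, hy⟩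
    exacts [absurd (.inr rfl) hy, rfl, absurd (.inl rfl) hy]
  have hmM : Anticomplete G {p (i + 1)} (M \ {p i, p (i + 2)}) := by
    refine hanti _ (hpB _ (by lia)) (fun e => ?_) (fun e => ?_) fun k hk hki => ⟨fun e => ?_, ?_⟩
    · have := hp.inj (by lia) (by lia) e; lia
    · have := hp.inj (by lia) (by lia) e; lia
    · have := hp.inj (by lia) (by lia) e; lia
    · rw [hp.adj_iff (by lia) hk]; lia
  have hwM : Anticomplete G {w} (M \ {p i, p (i + 2)}) :=
    hanti w hwB (hw 0 n.zero_le).symm (hw n le_rfl).symm fun k hk hki =>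
      ⟨(hw k hk).symm, fun hadj => by have := hbetween k hk hadj; lia⟩
  refine h.free.theta <| containsTheta_of_links (fun e => ?_) ?_
    (links_of_adj_of_adj (hp.adj_succ (by lia)).symm (hp.adj_succ hi)) (links_of_adj_of_adj hwi hwj)
    hM (Anticomplete.mono ?_ (hleg _) (hleg w)) (hmM.mono (hleg _) subset_rfl)
    (hwM.mono (hleg w) subset_rfl)
  · have := hp.inj (by lia) (by lia) e; lia
  · rw [hp.adj_iff (by lia) (by lia)]; lia
  · rintro _ rfl _ rfl
    exact ⟨hw _ (by lia), fun hadj => hwm hadj.symm⟩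

lemma Sides.false_of_pendant_adj_consecutive (h : Sides G C A B) (hmin : Minimal (Attached G C) B)
    (hfin : B.Finite) {p : ℕ → W} {w : W} {i : ℕ} (hp : IsChordless G n p)
    (hpB : ∀ i ≤ n, p i ∈ B) (ha : Pendant G C B a (p 0)) (hz : Pendant G C B z w)
    (hw : ∀ i ≤ n, p i ≠ w) (hi : i + 1 ≤ n) (hwi : G.Adj w (p i)) (hwm : G.Adj w (p (i + 1)))
    (hfirst : ∀ k ≤ n, G.Adj w (p k) → i ≤ k) : False := by
  refine h.false_of_triangle_of_pendant hmin hfin ha hz (hp.links_segment i.zero_le (by lia)).symm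
    ⟨connected_induce_singleton w, rfl, rfl⟩ ?_ (Set.singleton_subset_iff.2 hz.foot_mem)
    (hpB _ hi) ?_ ?_ ?_
  · rintro _ ⟨k, ⟨-, hk⟩, rfl⟩
    exact hpB k (by lia)
  · rintro _ ⟨k, ⟨-, hk⟩, rfl⟩ _ rfl
    refine ⟨hw k (by lia), fun hadj => ⟨?_, rfl⟩, fun e => e.1 ▸ hwi.symm⟩
    rw [hk.antisymm (hfirst k (by lia) hadj.symm)]
  · rintro _ ⟨k, ⟨-, hk⟩, rfl⟩ _ rfl
    refine ⟨fun e => ?_, ?_⟩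
    · have := hp.inj (by lia) (by lia) e; lia
    · rw [hp.adj_iff (by lia) hi, hp.eq_iff (by lia) (by lia)]; lia
  · rintro _ rfl _ rfl
    exact ⟨(hw _ hi).symm, iff_of_true hwm ⟨rfl, rfl⟩⟩

lemma dist_le_two_of_common_adj {u v w : W} (hu : G.Adj w u) (hv : G.Adj w v) : G.dist u v ≤ 2 :=
  dist_le (.cons hu.symm (.cons hv .nil))

lemma Sides.false_of_isGeodesic (h : Sides G C A B) (hmin : Minimal (Attached G C) B)
    (hfin : B.Finite) {p : ℕ → B} {w : B} (hp : IsGeodesic (G.induce B) n p)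
    (ha : Pendant G C B a (p 0)) (hb : Pendant G C B b (p n)) (hab : a ≠ b)
    (hz : Pendant G C B z w) (hw : ∀ i ≤ n, p i ≠ w)
    (hclaw : ∀ v ∈ B, IsClaw G B a b z v → G.Adj v z) : False := by
  have hp' := hp.isChordless.coe
  have hpB : ∀ i ≤ n, (p i : W) ∈ B := fun i _ => (p i).2
  have hw' : ∀ i ≤ n, (p i : W) ≠ w := fun i hi e => hw i hi (Subtype.ext e)
  obtain ⟨i, j, hij, hj, hwi, hwj, hbetween⟩ := h.exists_two_adj hp' hpB ha hb hab hz hw' hclaw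
  have hdist := dist_le_two_of_common_adj (G := G.induce B) hwi hwj
  rw [hp (by lia) hj] at hdist
  obtain rfl : j = i + 2 := by lia
  exact h.false_of_pendant_adj_consecutive hmin hfin hp' hpB ha hz hw' (by lia) hwi
    (h.adj_between hp' hpB ha hb w.2 hw' hj hwi hwj hbetween) fun k hk hwk => (hbetween k hk hwk).1

lemma Sides.false_of_dist_le (h : Sides G C A B) (hmin : Minimal (Attached G C) B)
    (hfin : B.Finite) {u v w : B} (ha : Pendant G C B a u) (hb : Pendant G C B b v)
    (hz : Pendant G C B z w) (hab : a ≠ b) (hwv : w ≠ v)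
    (hdist : (G.induce B).dist u v ≤ (G.induce B).dist u w)
    (hclaw : ∀ x ∈ B, IsClaw G B a b z x → G.Adj x z) : False := by
  obtain ⟨p, h₀, hn, hp⟩ := exists_isGeodesic hmin.prop.connected u v
  refine h.false_of_isGeodesic hmin hfin hp (h₀ ▸ ha) (by rwa [hn]) hab hz (fun i hi e => ?_) hclaw
  have := hp i.zero_le hi
  rw [h₀, e, Nat.sub_zero] at this
  exact hwv (e.symm.trans ((congrArg p (hi.antisymm (this ▸ hdist))).trans hn))

/-- `X` is the vertex set of a chordless path with ends `l` and `r`. -/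
def IsPathOn (G : SimpleGraph W) (X : Set W) (l r : W) : Prop :=
  ∃ n p, IsChordless G n p ∧ p 0 = l ∧ p n = r ∧ X = p '' Set.Icc 0 n

lemma Sides.isPathOn_of_dist_maximal (h : Sides G C A B) (hmin : Minimal (Attached G C) B)
    (hfin : B.Finite) {u v : B} (huv : u ≠ v) (ha : Pendant G C B a u) (hb : Pendant G C B b v)
    (hmax : ∀ (u' v' : B) c d, Pendant G C B c u' → Pendant G C B d v' →
      (G.induce B).dist u' v' ≤ (G.induce B).dist u v) : IsPathOn G B u v := by
  obtain ⟨p, h₀, hn, hp⟩ := exists_isGeodesic hmin.prop.connected u v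
  have hp' := hp.isChordless.coe
  set T : Set W := (fun i => (p i : W)) '' Set.Icc 0 ((G.induce B).dist u v)
  refine ⟨_, _, hp', congrArg Subtype.val h₀, congrArg Subtype.val hn, by_contra fun hne => ?_⟩
  have hTB : T ⊆ B := by rintro _ ⟨i, -, rfl⟩; exact (p i).2
  obtain ⟨z, w, hw, hz⟩ := exists_pendant_notMem hmin hfin
    (hp'.links_segment (Nat.zero_le _) le_rfl).connected (hTB.ssubset_of_ne (Ne.symm hne))
  lift w to B using hw.1
  have hwp : ∀ i ≤ (G.induce B).dist u v, p i ≠ w := fun i hi e =>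
    hw.2 ⟨i, ⟨i.zero_le, hi⟩, congrArg Subtype.val e⟩
  have hwu : u ≠ w := h₀ ▸ hwp 0 (Nat.zero_le _)
  have hwv : v ≠ w := fun e => hwp _ le_rfl (hn.trans e)
  have hne_val : ∀ {x y : B}, x ≠ y → (x : W) ≠ y := fun hxy e => hxy (Subtype.ext e)
  have hab := ha.ne hb (hne_val huv)
  have haz := ha.ne hz (hne_val hwu)
  have hbz := hb.ne hz (hne_val hwv)
  rcases h.exists_foot_adj_centers ha.mem hb.mem hz.mem hab haz hbz with hcl | hcl | hcl
  · refine h.false_of_dist_le hmin hfin hb hz ha hbz hwu ?_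
      fun x hx hxc => hcl x hx hxc.swap_right.swap_left
    rw [dist_comm (u := v) (v := u)]
    exact hmax _ _ _ _ hb hz
  · exact h.false_of_dist_le hmin hfin ha hz hb haz hwv (hmax _ _ _ _ ha hz)
      fun x hx hxc => hcl x hx hxc.swap_right
  · exact h.false_of_isGeodesic hmin hfin hp (h₀ ▸ ha) (by rwa [hn]) hab hz hwp hcl

lemma exists_pendant_pair_of_nontrivial (hmin : Minimal (Attached G C) X) (hfin : X.Finite)
    (hX : X.Nontrivial) : ∃ v w c d, v ≠ w ∧ Pendant G C X c v ∧ Pendant G C X d w := by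
  have hoff : ∀ x ∈ X, ∃ c, ∃ w ∈ X \ {x}, Pendant G C X c w := fun x hx =>
    exists_pendant_notMem hmin hfin (connected_induce_singleton x)
      ((Set.singleton_subset_iff.2 hx).ssubset_of_ne hX.ne_singleton.symm)
  obtain ⟨x, hx⟩ := hX.nonempty
  obtain ⟨c, v, hv, hc⟩ := hoff x hx
  obtain ⟨d, w, hw, hd⟩ := hoff v hv.1
  exact ⟨v, w, c, d, Ne.symm hw.2, hc, hd⟩

lemma Sides.exists_isPathOn (h : Sides G C A B) (hmin : Minimal (Attached G C) B)
    (hfin : B.Finite) (hC : C.Nonempty) : ∃ l r a b, IsPathOn G B l r ∧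
      Pendant G C B a l ∧ Pendant G C B b r := by
  rcases B.subsingleton_or_nontrivial with hB | hB
  · obtain ⟨c, hc⟩ := hC
    obtain ⟨x, hx, hcx⟩ := h.right.exists_adj c hc
    have hpend : Pendant G C B c x := ⟨hc, hx, fun y hy => ⟨fun _ => hB hy hx, fun e => e ▸ hcx⟩⟩
    refine ⟨x, x, c, c, ⟨0, fun _ => x, ⟨by simp, by simp⟩, rfl, rfl, ?_⟩, hpend, hpend⟩
    simpa using hB.eq_singleton_of_mem hx
  · have := hfin.to_subtype
    obtain ⟨v₀, w₀, c₀, d₀, hne, hc₀, hd₀⟩ := exists_pendant_pair_of_nontrivial hmin hfin hB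
    obtain ⟨⟨u, v⟩, ⟨⟨a, ha⟩, b, hb⟩, hmax⟩ := Set.exists_max_image
      {q : B × B | (∃ c, Pendant G C B c q.1) ∧ ∃ d, Pendant G C B d q.2}
      (fun q => (G.induce B).dist q.1 q.2) (Set.toFinite _)
      ⟨(⟨v₀, hc₀.foot_mem⟩, ⟨w₀, hd₀.foot_mem⟩), ⟨c₀, hc₀⟩, d₀, hd₀⟩
    refine ⟨u, v, a, b, h.isPathOn_of_dist_maximal hmin hfin ?_ ha hb
      fun u' v' c d hc hd => hmax (u', v') ⟨⟨c, hc⟩, d, hd⟩, ha, hb⟩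
    rintro rfl
    have := hmax (⟨v₀, hc₀.foot_mem⟩, ⟨w₀, hd₀.foot_mem⟩) ⟨⟨c₀, hc₀⟩, d₀, hd₀⟩
    simp only [dist_self, nonpos_iff_eq_zero, hmin.prop.connected.dist_eq_zero_iff] at this
    exact hne (congrArg Subtype.val this)

end MinimalSidesArePaths

section MatchingEnds

variable {W : Type} {G : SimpleGraph W} {A B C X Y : Set W} {a b c d l r l' r' z : W} {n : ℕ}

lemma IsClaw.mono {u : W} (h : IsClaw G X a b z u) (hXY : X ⊆ Y) : IsClaw G Y a b z u := by
  obtain ⟨hu, L, M, N, ⟨hL, hLX⟩, ⟨hM, hMX⟩, ⟨hN, hNX⟩, hanti⟩ := h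
  exact ⟨hu.imp_left (@hXY u), L, M, N, ⟨hL, hLX.trans (Set.insert_subset_insert hXY)⟩,
    ⟨hM, hMX.trans (Set.insert_subset_insert hXY)⟩,
    ⟨hN, hNX.trans (Set.insert_subset_insert hXY)⟩, hanti⟩

lemma IsTriangle.mono {s t q : W} (h : IsTriangle G X a b z s t q) (hXY : X ⊆ Y) :
    IsTriangle G Y a b z s t q := by
  obtain ⟨L, M, N, ⟨hL, hLX⟩, ⟨hM, hMX⟩, ⟨hN, hNX⟩, htouch⟩ := h
  exact ⟨L, M, N, ⟨hL, hLX.trans (Set.insert_subset_insert hXY)⟩,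
    ⟨hM, hMX.trans (Set.insert_subset_insert hXY)⟩,
    ⟨hN, hNX.trans (Set.insert_subset_insert hXY)⟩, htouch⟩

lemma IsPathOn.symm (h : IsPathOn G X l r) : IsPathOn G X r l := by
  obtain ⟨n, p, hp, rfl, rfl, rfl⟩ := h
  refine ⟨n, _, hp.reverse, by simp, by simp, Set.Subset.antisymm ?_ ?_⟩
  · rintro _ ⟨i, ⟨-, hi⟩, rfl⟩
    exact ⟨n - i, ⟨Nat.zero_le _, Nat.sub_le _ _⟩, by simp only [Nat.sub_sub_self hi]⟩
  · rintro _ ⟨i, -, rfl⟩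
    exact ⟨n - i, ⟨Nat.zero_le _, Nat.sub_le _ _⟩, rfl⟩

/-- `z` has two nonadjacent neighbors in `X`. -/
def HasNonadjNeighbors (G : SimpleGraph W) (X : Set W) (z : W) : Prop :=
  ∃ x ∈ X, ∃ y ∈ X, x ≠ y ∧ ¬G.Adj x y ∧ G.Adj z x ∧ G.Adj z y

lemma IsChordless.hasNonadjNeighbors_iff {p : ℕ → W} (hp : IsChordless G n p) :
    HasNonadjNeighbors G (p '' Set.Icc 0 n) z ↔
      ∃ i j, i + 2 ≤ j ∧ j ≤ n ∧ G.Adj z (p i) ∧ G.Adj z (p j) := by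
  constructor
  · rintro ⟨_, ⟨i, ⟨-, hi⟩, rfl⟩, _, ⟨j, ⟨-, hj⟩, rfl⟩, hne, hnadj, hzi, hzj⟩
    rw [Ne, hp.eq_iff hi hj] at hne
    rw [hp.adj_iff hi hj] at hnadj
    obtain hij | hij : i + 2 ≤ j ∨ j + 2 ≤ i := by lia
    exacts [⟨i, j, hij, hj, hzi, hzj⟩, ⟨j, i, hij, hi, hzj, hzi⟩]
  · rintro ⟨i, j, hij, hj, hzi, hzj⟩
    refine ⟨_, ⟨i, ⟨i.zero_le, by lia⟩, rfl⟩, _, ⟨j, ⟨j.zero_le, hj⟩, rfl⟩, ?_, ?_, hzi, hzj⟩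
    · rw [Ne, hp.eq_iff (by lia) hj]
      lia
    · rw [hp.adj_iff (by lia) hj]
      lia

/-- `z` is a vertex of `C` that is pendant at neither end of a path on `X` from `l` to `r`. -/
structure MissesEnds (G : SimpleGraph W) (C X : Set W) (l r z : W) : Prop where
  mem : z ∈ C
  not_left : ¬Pendant G C X z l
  not_right : ¬Pendant G C X z r

lemma MissesEnds.symm (h : MissesEnds G C X l r z) : MissesEnds G C X r l z :=
  ⟨h.mem, h.not_right, h.not_left⟩

lemma MissesEnds.ne_left (h : MissesEnds G C X l r z) (ha : Pendant G C X a l) : a ≠ z := by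
  rintro rfl
  exact h.not_left ha

lemma MissesEnds.ne_right (h : MissesEnds G C X l r z) (hb : Pendant G C X b r) : b ≠ z :=
  h.symm.ne_left hb

lemma Attached.exists_tripod_of_missesEnds (hX : Attached G C X)
    (hC : ∀ x ∈ C, ∀ y ∈ C, ¬G.Adj x y) (hpath : IsPathOn G X l r) (ha : Pendant G C X a l)
    (hb : Pendant G C X b r) (hab : a ≠ b) (hz : MissesEnds G C X l r z) :
    (HasNonadjNeighbors G X z ∧ IsClaw G X a b z z) ∨
      (∃ s ∈ X, ∃ t ∈ X, IsTriangle G X a b z s t z) ∨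
      ∃ u, Pendant G C X z u ∧ IsClaw G X a b z u := by
  obtain ⟨n, p, hp, rfl, rfl, rfl⟩ := hpath
  have hmem : ∀ i ≤ n, p i ∈ p '' Set.Icc 0 n := fun i hi => ⟨i, ⟨i.zero_le, hi⟩, rfl⟩
  have hQ : IsConnector G (p '' Set.Icc 0 n) z z {z} :=
    ⟨connected_induce_singleton z, rfl, rfl, fun w hw hwp => hX.disjoint w hwp (hw ▸ hz.mem),
      hX.exists_adj z hz.mem, fun w hw _ _ _ => hw⟩
  rcases hX.exists_tripod_of_isConnector hC hp hmem ha hb hab hz.mem (hz.ne_left ha)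
      (hz.ne_right hb) (Set.singleton_subset_iff.2 (Set.mem_insert _ _)) hQ with
    ⟨i, j, hij, hj, hzi, hzj, -, hclaw⟩ | ⟨i, hi, htri⟩ | ⟨i, hi, hadj, hclaw⟩
  · exact .inl ⟨hp.hasNonadjNeighbors_iff.2 ⟨i, j, hij, hj, hzi, hzj⟩, hclaw⟩
  · exact .inr (.inl ⟨_, hmem i (by lia), _, hmem _ hi, htri⟩)
  · refine .inr (.inr ⟨_, ⟨hz.mem, hmem i hi, ?_⟩, hclaw⟩)
    rintro _ ⟨k, ⟨-, hk⟩, rfl⟩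
    rw [hadj k hk, hp.eq_iff hk hi]

lemma Sides.eq_or_adj_of_isClaw_of_missesEnds (h : Sides G C A B) (hA : IsPathOn G A l r)
    (ha : Pendant G C A a l) (hb : Pendant G C A b r) (hab : a ≠ b) (hz : MissesEnds G C A l r z)
    {v : W} (hv : IsClaw G B a b z v) : v = z ∨ G.Adj v z ∧ HasNonadjNeighbors G A z := by
  have hvA : v ∉ A := by
    rcases hv.1 with hvB | rfl | rfl | rfl
    · exact h.symm.notMem_right hz.mem (Set.mem_insert_of_mem _ hvB)
    · exact fun hvA => h.left.disjoint _ hvA ha.mem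
    · exact fun hvA => h.left.disjoint _ hvA hb.mem
    · exact fun hvA => h.left.disjoint _ hvA hz.mem
  rcases h.left.exists_tripod_of_missesEnds h.indep hA ha hb hab hz with
    ⟨hnon, hclaw⟩ | ⟨s, hs, t, ht, htri⟩ | ⟨u, hu, hclaw⟩
  · exact (h.eq_or_adj_of_isClaw_of_isClaw hclaw hv).imp Eq.symm fun hadj => ⟨hadj.symm, hnon⟩
  · rcases h.symm.eq_of_isClaw_of_isTriangle ha.mem hb.mem hz.mem hv htri with rfl | rfl | hvz
    exacts [absurd hs hvA, absurd ht hvA, .inl hvz]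
  · rcases h.eq_or_adj_of_isClaw_of_isClaw hclaw hv with rfl | hadj
    · exact absurd hu.foot_mem hvA
    rcases hv.1 with hvB | rfl | rfl | hvz
    · exact absurd hadj (h.anticomplete _ hu.foot_mem _ hvB).2
    · exact absurd ((ha.adj_iff _ hu.foot_mem).1 hadj.symm ▸ hu) hz.not_left
    · exact absurd ((hb.adj_iff _ hu.foot_mem).1 hadj.symm ▸ hu) hz.not_right
    · exact .inl hvz

lemma Sides.eq_of_isTriangle_of_missesEnds (h : Sides G C A B) (hA : IsPathOn G A l r)
    (ha : Pendant G C A a l) (hb : Pendant G C A b r) (hab : a ≠ b) (hz : MissesEnds G C A l r z)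
    {s t q : W} (htri : IsTriangle G B a b z s t q) : q = z := by
  obtain ⟨hs, ht, hq⟩ : s ∈ insert a B ∧ t ∈ insert b B ∧ q ∈ insert z B := by
    obtain ⟨L, M, N, ⟨hL, hLB⟩, ⟨hM, hMB⟩, ⟨hN, hNB⟩, -⟩ := htri
    exact ⟨hLB hL.left_mem, hMB hM.left_mem, hNB hN.left_mem⟩
  have hsA := h.symm.notMem_right ha.mem hs
  have htA := h.symm.notMem_right hb.mem ht
  have hqA := h.symm.notMem_right hz.mem hq
  have hzB : z ∉ B := fun hzB => h.right.disjoint z hzB hz.mem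
  rcases h.left.exists_tripod_of_missesEnds h.indep hA ha hb hab hz with
    ⟨-, hclaw⟩ | ⟨s', hs', t', ht', htri'⟩ | ⟨u, hu, hclaw⟩
  · rcases h.eq_of_isClaw_of_isTriangle ha.mem hb.mem hz.mem hclaw htri with rfl | rfl | hzq
    · exact absurd (hs.resolve_right hzB).symm (hz.ne_left ha)
    · exact absurd (ht.resolve_right hzB).symm (hz.ne_right hb)
    · exact hzq.symm
  · rcases h.eq_of_isTriangle_of_isTriangle htri' htri with rfl | rfl | hzq
    exacts [absurd hs' hsA, absurd ht' htA, hzq.symm]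
  · rcases h.eq_of_isClaw_of_isTriangle ha.mem hb.mem hz.mem hclaw htri with rfl | rfl | rfl
    exacts [absurd hu.foot_mem hsA, absurd hu.foot_mem htA, absurd hu.foot_mem hqA]

lemma Sides.false_of_shared_of_missesEnds (h : Sides G C A B) (hA : IsPathOn G A l r)
    (hB : IsPathOn G B l' r') (hlr : l ≠ r) (hlr' : l' ≠ r') (ha : Pendant G C A a l)
    (ha' : Pendant G C B a l') (hb : Pendant G C A b r) (hb' : MissesEnds G C B l' r' b)
    (hd : MissesEnds G C A l r d) (hd' : Pendant G C B d r') : False := by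
  have hclaw : ∀ {v}, IsClaw G B a d b v → v = d ∨ G.Adj v d ∧ HasNonadjNeighbors G A d :=
    fun hv => h.eq_or_adj_of_isClaw_of_missesEnds hA ha hb (ha.ne hb hlr) hd hv.swap_right
  rcases h.right.exists_tripod_of_missesEnds h.indep hB ha' hd' (ha'.ne hd' hlr') hb' with
    ⟨-, hv⟩ | ⟨s, -, t, ht, htri⟩ | ⟨u, hu, hv⟩
  · rcases hclaw hv with rfl | ⟨hbd, -⟩
    exacts [hb'.not_right hd', h.indep _ hb.mem _ hd.mem hbd]
  · have := h.eq_of_isTriangle_of_missesEnds hA ha hb (ha.ne hb hlr) hd htri.swap_right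
    exact h.right.disjoint t ht (this ▸ hd.mem)
  · rcases hclaw hv with rfl | ⟨hud, -⟩
    · exact h.right.disjoint _ hu.foot_mem hd.mem
    · exact hb'.not_right ((hd'.adj_iff _ hu.foot_mem).1 hud.symm ▸ hu)

lemma Attached.isClaw_of_two_pendants (hX : Attached G C X) (hC : ∀ x ∈ C, ∀ y ∈ C, ¬G.Adj x y)
    (hc : Pendant G C X c l) (hd : Pendant G C X d l) (hb : b ∈ C) (hcd : c ≠ d) (hcb : c ≠ b)
    (hdb : d ≠ b) : IsClaw G X c d b l := by
  obtain ⟨x, hx, hbx⟩ := hX.exists_adj b hb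
  have hlinks : ∀ {c}, Pendant G C X c l → Links G {l, c} l c := fun hc =>
    ⟨connected_induce_insert (connected_induce_singleton _) rfl hc.adj.symm, by simp, by simp⟩
  have hleg : ∀ c, ({l, c} : Set W) \ {l} ⊆ {c} := by simp
  have hanti : ∀ {c}, Pendant G C X c l → c ≠ b →
      Anticomplete G (({l, c} : Set W) \ {l}) (insert b X \ {l}) := by
    rintro c hc hcb x hxc y ⟨rfl | hy, hyl⟩ <;> obtain rfl := hleg c hxc
    · exact ⟨hcb, hC _ hc.mem _ hb⟩
    · exact ⟨fun e => hX.disjoint y hy (e ▸ hc.mem), fun hadj => hyl ((hc.adj_iff y hy).1 hadj)⟩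
  refine ⟨.inl hc.foot_mem, _, _, _, ⟨hlinks hc, (hleg c).trans (by simp)⟩,
    ⟨hlinks hd, (hleg d).trans (by simp)⟩, ⟨⟨connected_induce_insert hX.connected hx hbx,
      Set.mem_insert_of_mem _ hc.foot_mem, Set.mem_insert _ _⟩, Set.sdiff_subset⟩,
    ?_, hanti hc hcb, hanti hd hdb⟩
  intro x hx y hy
  obtain rfl := hleg c hx
  obtain rfl := hleg d hy
  exact ⟨hcd, hC _ hc.mem _ hd.mem⟩

lemma Sides.false_of_two_shared_of_missesEnds (h : Sides G C A B) (hB : IsPathOn G B l' r')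
    (hlr : l ≠ r) (hlr' : l' ≠ r') (hc : Pendant G C A c l) (hc' : Pendant G C B c l')
    (hd : Pendant G C A d l) (hd' : Pendant G C B d r') (hb : Pendant G C A b r)
    (hb' : MissesEnds G C B l' r' b) : False := by
  have hcd := hc'.ne hd' hlr'
  have hclaw := h.left.isClaw_of_two_pendants h.indep hc hd hb.mem hcd (hb'.ne_left hc')
    (hb'.ne_right hd')
  rcases h.symm.eq_or_adj_of_isClaw_of_missesEnds hB hc' hd' hcd hb' hclaw with rfl | ⟨hlb, -⟩
  · exact h.left.disjoint _ hc.foot_mem hb.mem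
  · exact hlr ((hb.adj_iff _ hc.foot_mem).1 hlb.symm)

/-- The ends `l`, `r` of the path on `A` and `l'`, `r'` of the path on `B` carry pendant vertices
`a`, `b`, `c`, `d` respectively, each of which is pendant at neither end of the other path. -/
structure HasFreePendants (G : SimpleGraph W) (C A B : Set W) (l r l' r' a b c d : W) : Prop where
  sides : Sides G C A B
  left : IsPathOn G A l r
  right : IsPathOn G B l' r'
  left_ne : l ≠ r
  right_ne : l' ≠ r'
  pendant_a : Pendant G C A a l
  pendant_b : Pendant G C A b r
  pendant_c : Pendant G C B c l'
  pendant_d : Pendant G C B d r'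
  misses_a : MissesEnds G C B l' r' a
  misses_b : MissesEnds G C B l' r' b
  misses_c : MissesEnds G C A l r c
  misses_d : MissesEnds G C A l r d

namespace HasFreePendants

lemma swap_left (h : HasFreePendants G C A B l r l' r' a b c d) :
    HasFreePendants G C A B r l l' r' b a c d :=
  ⟨h.sides, h.left.symm, h.right, h.left_ne.symm, h.right_ne, h.pendant_b, h.pendant_a,
    h.pendant_c, h.pendant_d, h.misses_b, h.misses_a, h.misses_c.symm, h.misses_d.symm⟩

lemma symm (h : HasFreePendants G C A B l r l' r' a b c d) :
    HasFreePendants G C B A l' r' l r c d a b :=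
  ⟨h.sides.symm, h.right, h.left, h.right_ne, h.left_ne, h.pendant_c, h.pendant_d, h.pendant_a,
    h.pendant_b, h.misses_c, h.misses_d, h.misses_a, h.misses_b⟩

lemma swap_right (h : HasFreePendants G C A B l r l' r' a b c d) :
    HasFreePendants G C A B l r r' l' a b d c :=
  h.symm.swap_left.symm

lemma ne (h : HasFreePendants G C A B l r l' r' a b c d) : a ≠ b :=
  h.pendant_a.ne h.pendant_b h.left_ne

lemma adj_left_and_hasNonadjNeighbors (h : HasFreePendants G C A B l r l' r' a b c d) {p : ℕ → W}
    (hp : IsChordless G n p) (h₀ : p 0 = l') (hpB : ∀ i ≤ n, p i ∈ B) {s : ℕ} (hs : s ≤ n)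
    (has : G.Adj a (p s)) (hb : ∀ i ≤ n, G.Adj b (p i) ↔ i = n) :
    G.Adj a l' ∧ HasNonadjNeighbors G A c := by
  obtain ⟨ha, hb', hc⟩ := And.intro h.misses_a (And.intro h.misses_b h.pendant_c)
  have hCC : ∀ x ∈ ({a, b, c} : Set W), x ∈ C := by
    rintro x (rfl | rfl | rfl)
    exacts [ha.mem, hb'.mem, hc.mem]
  have hmem : ∀ i ≤ n, p i ∈ p '' Set.Icc 0 n := fun i hi => ⟨i, ⟨i.zero_le, hi⟩, rfl⟩
  have hsub : p '' Set.Icc 0 n ⊆ B := by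
    rintro _ ⟨i, ⟨-, hi⟩, rfl⟩
    exact hpB i hi
  have hnC : ∀ x ∈ p '' Set.Icc 0 n, x ∉ ({a, b, c} : Set W) := fun x hx hxC =>
    h.sides.right.disjoint x (hsub hx) (hCC x hxC)
  have hX : Attached G {a, b, c} (p '' Set.Icc 0 n) := by
    refine ⟨(hp.links_segment n.zero_le le_rfl).connected, hnC, ?_⟩
    rintro x (rfl | rfl | rfl)
    exacts [⟨_, hmem s hs, has⟩, ⟨_, hmem n le_rfl, (hb n le_rfl).2 rfl⟩,
      ⟨_, hmem 0 n.zero_le, h₀ ▸ hc.adj⟩]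
  have hQ : IsConnector G (p '' Set.Icc 0 n) a a {a} :=
    ⟨connected_induce_singleton a, rfl, rfl, fun w hw hwp => hnC w hwp (.inl hw),
      ⟨_, hmem s hs, has⟩, fun w hw _ _ _ => hw⟩
  have hclaw : ∀ {v}, IsClaw G (p '' Set.Icc 0 n) c b a v →
      v = c ∨ G.Adj v c ∧ HasNonadjNeighbors G A c := fun hv =>
    h.sides.eq_or_adj_of_isClaw_of_missesEnds h.left h.pendant_a h.pendant_b h.ne h.misses_c
      (hv.mono hsub).swap_right.swap_left.swap_right
  rcases hX.exists_tripod_of_isConnector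
      (fun x hx y hy => h.sides.indep x (hCC x hx) y (hCC y hy)) hp hmem
      ⟨by simp, hmem 0 n.zero_le, fun x hx => h₀ ▸ hc.adj_iff x (hsub hx)⟩
      ⟨by simp, hmem n le_rfl, by
        rintro _ ⟨i, ⟨-, hi⟩, rfl⟩; rw [hb i hi, hp.eq_iff hi le_rfl]⟩
      (hb'.ne_left hc) (by simp) (ha.ne_left hc) h.ne.symm (by simp) hQ with
    ⟨i, j, -, -, -, -, -, hv⟩ | ⟨i, hi, htri⟩ | ⟨i, hi, hadj, hv⟩
  · rcases hclaw hv with rfl | ⟨hac, -⟩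
    exacts [absurd rfl (ha.ne_left hc), absurd hac (h.sides.indep _ ha.mem _ hc.mem)]
  · have := h.sides.eq_of_isTriangle_of_missesEnds h.left h.pendant_a h.pendant_b h.ne h.misses_c
      (htri.mono hsub).swap_right.swap_left.swap_right
    exact absurd (this ▸ hc.mem) (h.sides.right.disjoint _ (hpB i (by lia)))
  · rcases hclaw hv with hpc | ⟨hpc, hnon⟩
    · exact absurd (hpc ▸ hc.mem) (h.sides.right.disjoint _ (hpB i hi))
    · rw [← (hc.adj_iff _ (hpB i hi)).1 hpc.symm]
      exact ⟨(hadj i hi).2 rfl, hnon⟩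

lemma adj_or_adj_and_hasNonadjNeighbors (h : HasFreePendants G C A B l r l' r' a b c d) :
    (G.Adj a l' ∨ G.Adj b l') ∧ HasNonadjNeighbors G A c := by
  classical
  obtain ⟨n, p, hp, h₀, -, hB⟩ := h.right
  have hpB : ∀ i ≤ n, p i ∈ B := fun i hi => hB ▸ ⟨i, ⟨i.zero_le, hi⟩, rfl⟩
  have hfirst : ∀ x ∈ C, ∃ t ≤ n, G.Adj x (p t) ∧ ∀ i ≤ t, G.Adj x (p i) ↔ i = t := by
    intro x hx
    obtain ⟨y, hy, hxy⟩ := h.sides.right.exists_adj x hx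
    obtain ⟨i, ⟨-, hi⟩, rfl⟩ := hB ▸ hy
    have hex : ∃ i, G.Adj x (p i) := ⟨i, hxy⟩
    exact ⟨Nat.find hex, (Nat.find_min' hex hxy).trans hi, Nat.find_spec hex, fun j hj =>
      ⟨fun hadj => hj.antisymm (Nat.find_min' hex hadj), fun e => e ▸ Nat.find_spec hex⟩⟩
  obtain ⟨s, hs, has, hs_first⟩ := hfirst a h.misses_a.mem
  obtain ⟨t, ht, hbt, ht_first⟩ := hfirst b h.misses_b.mem
  rcases le_total s t with hst | hts
  · exact (h.adj_left_and_hasNonadjNeighbors (hp.take ht) h₀ (fun i hi => hpB i (hi.trans ht)) hst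
      has ht_first).imp_left .inl
  · exact (h.swap_left.adj_left_and_hasNonadjNeighbors (hp.take hs) h₀
      (fun i hi => hpB i (hi.trans hs)) hts hbt hs_first).imp_left .inr

lemma not_adj_right_of_adj_left (h : HasFreePendants G C A B l r l' r' a b c d)
    (hal : G.Adj a l') : ¬G.Adj a r' := by
  intro har
  obtain ⟨n, p, hp, rfl, rfl, rfl⟩ := h.right
  obtain ⟨i, j, hij, hj, hbi, hbj⟩ := hp.hasNonadjNeighbors_iff.1
    h.symm.swap_right.adj_or_adj_and_hasNonadjNeighbors.2
  have hleg : ∀ {k m}, k ≤ m → m ≤ n → p '' Set.Icc k m ⊆ p '' Set.Icc 0 n := fun _ hm =>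
    Set.image_mono (Set.Icc_subset_Icc (Nat.zero_le _) hm)
  have hsdiff : ∀ S : Set W, insert a (insert b S) \ {a, b} ⊆ S := fun S x hx => by
    obtain ⟨rfl | rfl | hxS, hx'⟩ := hx
    exacts [absurd (.inl rfl) hx', absurd (.inr rfl) hx', hxS]
  have hlinks : ∀ {S : Set W} {x y}, Links G S x y → G.Adj a x → G.Adj b y →
      Links G (insert a (insert b S)) a b := fun hS hax hby =>
    (hS.symm.insert hby).symm.insert hax
  have hanti := h.sides.anticomplete.symm
  exact h.sides.free.theta <| containsTheta_of_links h.ne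
    (h.sides.indep _ h.misses_a.mem _ h.misses_b.mem)
    (hlinks (hp.links_segment i.zero_le (by lia)) hal hbi)
    (hlinks (hp.links_segment hj le_rfl).symm har hbj)
    (h.sides.left.links h.misses_a.mem h.misses_b.mem)
    ((hp.anticomplete_segments hij le_rfl).mono (hsdiff _) (hsdiff _))
    (hanti.mono ((hsdiff _).trans (hleg i.zero_le (by lia))) (hsdiff _))
    (hanti.mono ((hsdiff _).trans (hleg hj le_rfl)) (hsdiff _))

lemma isClaw_of_adj_left (h : HasFreePendants G C A B l r l' r' a b c d)
    (hal : G.Adj a l') : IsClaw G B a b d b := by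
  have har := h.not_adj_right_of_adj_left hal
  have hbr : G.Adj b r' := h.swap_right.adj_or_adj_and_hasNonadjNeighbors.1.resolve_left har
  obtain ⟨n, p, hp, rfl, rfl, rfl⟩ := h.right
  obtain ⟨i, j, hij, hj, hbi, -⟩ := hp.hasNonadjNeighbors_iff.1
    h.symm.swap_right.adj_or_adj_and_hasNonadjNeighbors.2
  have hd := h.pendant_d
  refine ⟨.inr (.inr (.inl rfl)), insert b (insert a (p '' Set.Icc 0 i)), {b}, {d, p n, b},
    ⟨((hp.links_segment i.zero_le (by lia)).insert hal).symm.insert hbi, ?_⟩,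
    ⟨⟨connected_induce_singleton b, rfl, rfl⟩, by simp⟩,
    ⟨links_of_adj_of_adj hbr.symm hd.adj.symm, ?_⟩, by simp [Anticomplete], ?_,
    by simp [Anticomplete]⟩
  · rintro x ⟨rfl | rfl | ⟨k, ⟨-, hk⟩, rfl⟩, hxb⟩
    exacts [absurd rfl hxb, .inl rfl, .inr ⟨k, ⟨k.zero_le, by lia⟩, rfl⟩]
  · rintro x ⟨rfl | rfl | rfl, hxb⟩
    exacts [.inl rfl, .inr hd.foot_mem, absurd rfl hxb]
  · have hne : ∀ {x}, x ∈ C → x ≠ p n := fun hx e => h.sides.right.disjoint _ hd.foot_mem (e ▸ hx)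
    rintro x ⟨rfl | rfl | ⟨k, ⟨-, hk⟩, rfl⟩, hxb⟩ y ⟨rfl | rfl | rfl, hyb⟩
    · exact absurd rfl hxb
    · exact absurd rfl hxb
    · exact absurd rfl hxb
    · exact ⟨h.misses_d.ne_left h.pendant_a, h.sides.indep _ h.misses_a.mem _ hd.mem⟩
    · exact ⟨hne h.misses_a.mem, har⟩
    · exact absurd rfl hyb
    · have hkB : p k ∈ p '' Set.Icc 0 n := ⟨k, ⟨k.zero_le, by lia⟩, rfl⟩
      refine ⟨fun e => h.sides.right.disjoint _ hkB (e ▸ hd.mem), fun hadj => ?_⟩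
      have := hp.inj (by lia) le_rfl ((hd.adj_iff _ hkB).1 hadj.symm)
      lia
    · rw [Ne, hp.eq_iff (by lia) le_rfl, hp.adj_iff (by lia) le_rfl]
      lia
    · exact absurd rfl hyb

lemma not_adj_left (h : HasFreePendants G C A B l r l' r' a b c d) : ¬G.Adj a l' := fun hal => by
  rcases h.sides.eq_or_adj_of_isClaw_of_missesEnds h.left h.pendant_a h.pendant_b h.ne h.misses_d
    (h.isClaw_of_adj_left hal) with rfl | ⟨hbd, -⟩
  exacts [h.misses_d.not_right h.pendant_b, h.sides.indep _ h.misses_b.mem _ h.misses_d.mem hbd]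

lemma false (h : HasFreePendants G C A B l r l' r' a b c d) : False :=
  h.adj_or_adj_and_hasNonadjNeighbors.1.elim h.not_adj_left h.swap_left.not_adj_left

end HasFreePendants

/-- Some vertex of `C` is pendant at `u` on the side `A` and at `v` on the side `B`. -/
def SharedPendant (G : SimpleGraph W) (C A B : Set W) (u v : W) : Prop :=
  ∃ x, Pendant G C A x u ∧ Pendant G C B x v

lemma SharedPendant.symm (h : SharedPendant G C A B l l') : SharedPendant G C B A l' l :=
  h.imp fun _ => And.symm

lemma Pendant.shared_or_missesEnds (ha : Pendant G C A a l) (l' r' : W) :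
    SharedPendant G C A B l l' ∨ SharedPendant G C A B l r' ∨ MissesEnds G C B l' r' a := by
  by_cases hl : Pendant G C B a l'
  · exact .inl ⟨a, ha, hl⟩
  by_cases hr : Pendant G C B a r'
  · exact .inr (.inl ⟨a, ha, hr⟩)
  exact .inr (.inr ⟨ha.mem, hl, hr⟩)

lemma Sides.sharedPendant_opposite_or_cross (h : Sides G C A B) (hA : IsPathOn G A l r)
    (hB : IsPathOn G B l' r') (hlr : l ≠ r) (hlr' : l' ≠ r') (hb : Pendant G C A b r)
    (hd : Pendant G C B d r') (hll' : SharedPendant G C A B l l') :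
    SharedPendant G C A B r r' ∨ SharedPendant G C A B l r' ∧ SharedPendant G C A B r l' := by
  obtain ⟨x, hxl, hxl'⟩ := hll'
  rcases hb.shared_or_missesEnds (B := B) l' r' with hrl' | hrr' | hb'
  · rcases hd.shared_or_missesEnds (B := A) l r with hlr' | hrr' | hd'
    · exact .inr ⟨hlr'.symm, hrl'⟩
    · exact .inl hrr'.symm
    · obtain ⟨y, hyr, hyl'⟩ := hrl'
      exact (h.symm.false_of_two_shared_of_missesEnds hA hlr' hlr hxl' hxl hyl' hyr hd hd').elim
  · exact .inl hrr'
  · rcases hd.shared_or_missesEnds (B := A) l r with hr'l | hrr' | hd'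
    · obtain ⟨y, hyr', hyl⟩ := hr'l
      exact (h.false_of_two_shared_of_missesEnds hB hlr hlr' hxl hxl' hyl hyr' hb hb').elim
    · exact .inl hrr'.symm
    · exact (h.false_of_shared_of_missesEnds hA hB hlr hlr' hxl hxl' hb hb' hd' hd).elim

lemma Sides.sharedPendant_ends (h : Sides G C A B) (hA : IsPathOn G A l r)
    (hB : IsPathOn G B l' r') (hlr : l ≠ r) (hlr' : l' ≠ r') (ha : Pendant G C A a l)
    (hb : Pendant G C A b r) (hc : Pendant G C B c l') (hd : Pendant G C B d r') :
    SharedPendant G C A B l l' ∧ SharedPendant G C A B r r' ∨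
      SharedPendant G C A B l r' ∧ SharedPendant G C A B r l' := by
  by_contra hcon
  have hll' : ¬SharedPendant G C A B l l' := fun hs => hcon <|
    (h.sharedPendant_opposite_or_cross hA hB hlr hlr' hb hd hs).imp (⟨hs, ·⟩) id
  have hl_r' : ¬SharedPendant G C A B l r' := fun hs => hcon <|
    (h.sharedPendant_opposite_or_cross hA hB.symm hlr hlr'.symm hb hc hs).symm.imp id (⟨hs, ·⟩)
  have hr_l' : ¬SharedPendant G C A B r l' := fun hs => hcon <|
    (h.sharedPendant_opposite_or_cross hA.symm hB hlr.symm hlr' ha hd hs).symm.imp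
      And.symm (⟨·, hs⟩)
  have hrr' : ¬SharedPendant G C A B r r' := fun hs => hcon <|
    (h.sharedPendant_opposite_or_cross hA.symm hB.symm hlr.symm hlr'.symm ha hc hs).imp
      (⟨·, hs⟩) And.symm
  have ha' := ((ha.shared_or_missesEnds l' r').resolve_left hll').resolve_left hl_r'
  have hb' := ((hb.shared_or_missesEnds l' r').resolve_left hr_l').resolve_left hrr'
  have hc' := ((hc.shared_or_missesEnds l r).resolve_left (mt .symm hll')).resolve_left
    (mt .symm hr_l')
  have hd' := ((hd.shared_or_missesEnds l r).resolve_left (mt .symm hl_r')).resolve_left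
    (mt .symm hrr')
  exact HasFreePendants.false ⟨h, hA, hB, hlr, hlr', ha, hb, hc, hd, ha', hb', hc', hd'⟩

end MatchingEnds

section Holes

variable {W : Type} {G : SimpleGraph W} {m n : ℕ} {f g : ℕ → W}

lemma zmod_eq_add_one_iff {N : ℕ} (hN : 2 ≤ N) (a b : ZMod N) :
    b = a + 1 ↔ b.val = a.val + 1 ∨ b.val = 0 ∧ a.val + 1 = N := by
  have : NeZero N := ⟨by lia⟩
  have ha := ZMod.val_lt a
  have hb := ZMod.val_lt b
  rw [← (ZMod.val_injective N).eq_iff, ZMod.val_add, ZMod.val_one_eq_one_mod,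
    Nat.mod_eq_of_lt (show 1 < N by lia)]
  obtain h | h : a.val + 1 < N ∨ a.val + 1 = N := by lia
  · rw [Nat.mod_eq_of_lt h]
    lia
  · rw [h, Nat.mod_self]
    lia

lemma isHoleEmb_comp_val {N : ℕ} {k : ℕ → W} (hN : 4 ≤ N)
    (hinj : ∀ i j, i < j → j < N → k i ≠ k j)
    (hadj : ∀ i j, i < j → j < N → (G.Adj (k i) (k j) ↔ j = i + 1 ∨ i = 0 ∧ j + 1 = N)) :
    IsHoleEmb G N fun z => k z.val := by
  have : NeZero N := ⟨by lia⟩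
  refine ⟨hN, fun a b hab => ZMod.val_injective N ?_, fun a b => ?_⟩
  · rcases lt_trichotomy a.val b.val with h | h | h
    · exact absurd hab (hinj _ _ h b.val_lt)
    · exact h
    · exact absurd hab.symm (hinj _ _ h a.val_lt)
  · have ha := a.val_lt
    have hb := b.val_lt
    rw [zmod_eq_add_one_iff (by lia), zmod_eq_add_one_iff (by lia)]
    rcases lt_trichotomy a.val b.val with h | h | h
    · rw [hadj _ _ h hb]
      lia
    · simp only [h]
      exact iff_of_false G.irrefl (by lia)
    · rw [G.adj_comm, hadj _ _ h ha]
      lia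

/-- The closed walk that follows `f 0, …, f m` and returns along `g n, …, g 0`, where `f 0 = g 0`
and `f m = g n` are intended. -/
def cycleOf (m n : ℕ) (f g : ℕ → W) (i : ℕ) : W :=
  if i ≤ m then f i else g (m + n - i)

lemma cycleOf_of_le {i : ℕ} (hi : i ≤ m) : cycleOf m n f g i = f i :=
  if_pos hi

lemma cycleOf_of_lt {i : ℕ} (hi : m < i) : cycleOf m n f g i = g (m + n - i) :=
  if_neg hi.not_ge

lemma ne_and_adj_iff_of_anticomplete_Ioo (hg : IsChordless G n g) (hm : 0 < m) (h₀ : f 0 = g 0)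
    (h₁ : f m = g n) (hfg : Anticomplete G (f '' Set.Ioo 0 m) (g '' Set.Ioo 0 n)) {i j : ℕ}
    (hi : i ≤ m) (hj : 0 < j) (hjn : j < n) : f i ≠ g j ∧
      (G.Adj (f i) (g j) ↔ i = 0 ∧ j = 1 ∨ i = m ∧ j + 1 = n) := by
  obtain rfl | rfl | hi' : i = 0 ∨ i = m ∨ i ∈ Set.Ioo 0 m := by
    rw [Set.mem_Ioo]
    lia
  · rw [h₀, Ne, hg.eq_iff (by lia) hjn.le, hg.adj_iff (by lia) hjn.le]
    lia
  · rw [h₁, Ne, hg.eq_iff le_rfl hjn.le, hg.adj_iff le_rfl hjn.le]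
    lia
  · obtain ⟨hne, hnadj⟩ := hfg _ ⟨i, hi', rfl⟩ _ ⟨j, ⟨hj, hjn⟩, rfl⟩
    have hi₀ := hi'.1.ne'
    have him := hi'.2.ne
    exact ⟨hne, iff_of_false hnadj (by lia)⟩

lemma isHoleEmb_cycleOf (hf : IsChordless G m f) (hg : IsChordless G n g) (hm : 2 ≤ m)
    (hn : 2 ≤ n) (h₀ : f 0 = g 0) (h₁ : f m = g n)
    (hfg : Anticomplete G (f '' Set.Ioo 0 m) (g '' Set.Ioo 0 n)) :
    IsHoleEmb G (m + n) fun z => cycleOf m n f g z.val := by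
  suffices h : ∀ i j, i < j → j < m + n → cycleOf m n f g i ≠ cycleOf m n f g j ∧
      (G.Adj (cycleOf m n f g i) (cycleOf m n f g j) ↔ j = i + 1 ∨ i = 0 ∧ j + 1 = m + n) from
    isHoleEmb_comp_val (by lia) (fun i j hij hj => (h i j hij hj).1) fun i j hij hj =>
      (h i j hij hj).2
  intro i j hij hj
  obtain hjm | ⟨him, hjm⟩ | him : j ≤ m ∨ (i ≤ m ∧ m < j) ∨ m < i := by lia
  · rw [cycleOf_of_le (by lia), cycleOf_of_le hjm, Ne, hf.eq_iff (by lia) hjm,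
      hf.adj_iff (by lia) hjm]
    lia
  · rw [cycleOf_of_le him, cycleOf_of_lt hjm]
    obtain ⟨hne, hadj⟩ := ne_and_adj_iff_of_anticomplete_Ioo hg (two_pos.trans_le hm) h₀ h₁ hfg
      him (show 0 < m + n - j by lia) (by lia)
    refine ⟨hne, hadj.trans ?_⟩
    lia
  · rw [cycleOf_of_lt him, cycleOf_of_lt (by lia), Ne, hg.eq_iff (by lia) (by lia),
      hg.adj_iff (by lia) (by lia)]
    lia

lemma range_cycleOf (hn : 0 < n) (h₀ : f 0 = g 0) (h₁ : f m = g n) :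
    (Set.range fun z : ZMod (m + n) => cycleOf m n f g z.val) =
      f '' Set.Icc 0 m ∪ g '' Set.Icc 0 n := by
  have : NeZero (m + n) := ⟨by lia⟩
  have hval {i : ℕ} (hi : i < m + n) : (i : ZMod (m + n)).val = i := ZMod.val_cast_of_lt hi
  refine Set.Subset.antisymm ?_ (Set.union_subset ?_ ?_)
  · rintro _ ⟨z, rfl⟩
    rcases le_or_gt z.val m with hz | hz
    · exact .inl ⟨z.val, ⟨Nat.zero_le _, hz⟩, (cycleOf_of_le hz).symm⟩
    · exact .inr ⟨m + n - z.val, ⟨Nat.zero_le _, by lia⟩, (cycleOf_of_lt hz).symm⟩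
  · rintro _ ⟨i, ⟨-, hi⟩, rfl⟩
    exact ⟨i, by simp only [hval (show i < m + n by lia), cycleOf_of_le hi]⟩
  · rintro _ ⟨j, ⟨-, hj⟩, rfl⟩
    obtain rfl | rfl | ⟨hj₀, hjn⟩ : j = 0 ∨ j = n ∨ 0 < j ∧ j < n := by lia
    · exact ⟨0, by simp only [ZMod.val_zero, cycleOf_of_le m.zero_le, h₀]⟩
    · exact ⟨m, by simp only [hval (show m < m + j by lia), cycleOf_of_le le_rfl, h₁]⟩
    · refine ⟨(m + n - j : ℕ), ?_⟩
      simp only [hval (show m + n - j < m + n by lia), cycleOf_of_lt (show m < m + n - j by lia),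
        Nat.sub_sub_self (show j ≤ m + n by lia)]

end Holes

section SpanningPaths

variable {W : Type} {G : SimpleGraph W} {A B C X : Set W} {a b c d l r l' r' x y : W} {m n : ℕ}
  {f g p : ℕ → W}

/-- `p` is a chordless path of length `n ≥ 2` from `x` to `y` whose internal vertices are exactly
the elements of `X`. -/
structure IsSpanningPath (G : SimpleGraph W) (X : Set W) (x y : W) (n : ℕ) (p : ℕ → W) : Prop
    extends IsChordless G n p where
  two_le : 2 ≤ n
  start_eq : p 0 = x
  end_eq : p n = y
  interior_eq : p '' Set.Ioo 0 n = X

lemma IsSpanningPath.image_Icc (hp : IsSpanningPath G X x y n p) :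
    p '' Set.Icc 0 n = insert x (insert y X) := by
  have hn := two_pos.trans_le hp.two_le
  rw [← Set.Ioc_insert_left hn.le, ← Set.Ioo_insert_right hn, Set.image_insert_eq,
    Set.image_insert_eq, hp.start_eq, hp.end_eq, hp.interior_eq]

lemma IsSpanningPath.exists_isInducedPathW (hp : IsSpanningPath G X x y n p) :
    ∃ w : G.Walk x y, IsInducedPathW G w ∧ ∀ v, v ∈ w.support ↔ v ∈ insert x (insert y X) := by
  rw [← hp.image_Icc]
  obtain ⟨hp, -, rfl, rfl, -⟩ := hp
  obtain ⟨w, hw, hsupp⟩ := hp.exists_isInducedPathW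
  exact ⟨w, hw, fun v => (hsupp v).trans ⟨fun ⟨i, hi, h⟩ => ⟨i, ⟨i.zero_le, hi⟩, h⟩,
    fun ⟨i, hi, h⟩ => ⟨i, hi.2, h⟩⟩⟩

lemma IsSpanningPath.exists_isHoleEmb (hf : IsSpanningPath G A x y m f)
    (hg : IsSpanningPath G B x y n g) (hAB : Anticomplete G A B) :
    ∃ k : ZMod (m + n) → W, IsHoleEmb G (m + n) k ∧
      Set.range k = insert x (insert y A) ∪ insert x (insert y B) := by
  have h₀ : f 0 = g 0 := hf.start_eq.trans hg.start_eq.symm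
  have h₁ : f m = g n := hf.end_eq.trans hg.end_eq.symm
  refine ⟨_, isHoleEmb_cycleOf hf.toIsChordless hg.toIsChordless hf.two_le hg.two_le h₀ h₁ ?_, ?_⟩
  · rwa [hf.interior_eq, hg.interior_eq]
  · rw [range_cycleOf (two_pos.trans_le hg.two_le) h₀ h₁, hf.image_Icc, hg.image_Icc]

lemma IsPathOn.exists_isSpanningPath (h : IsPathOn G X l r) (hX : Attached G C X)
    (hC : ∀ x ∈ C, ∀ y ∈ C, ¬G.Adj x y) (ha : Pendant G C X a l) (hb : Pendant G C X b r)
    (hab : a ≠ b) : ∃ n p, IsSpanningPath G X a b n p := by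
  obtain ⟨n, p, hp, rfl, rfl, rfl⟩ := h
  have hpX : ∀ i ≤ n, p i ∈ p '' Set.Icc 0 n := fun i hi => ⟨i, ⟨i.zero_le, hi⟩, rfl⟩
  obtain ⟨q, hq, rfl, rfl, hqp⟩ := hp.exists_extension hpX hX hC ha hb hab
  refine ⟨n + 2, q, hq.toIsChordless, by lia, rfl, rfl, Set.Subset.antisymm ?_ ?_⟩
  · rintro _ ⟨i, ⟨hi₀, hin⟩, rfl⟩
    exact hq.mem hi₀ hin
  · rintro _ ⟨i, ⟨-, hi⟩, rfl⟩
    exact ⟨i + 1, ⟨i.succ_pos, by lia⟩, hqp i hi⟩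

lemma IsPathOn.pendant_of_eq (h : IsPathOn G X l r) (hlr : l = r) (hX : Attached G C X)
    (hc : c ∈ C) : Pendant G C X c l ∧ Pendant G C X c r := by
  subst hlr
  obtain ⟨n, p, hp, rfl, hn, rfl⟩ := h
  obtain rfl := hp.inj le_rfl n.zero_le hn
  rw [and_self]
  obtain ⟨_, ⟨i, hi, rfl⟩, hci⟩ := hX.exists_adj c hc
  obtain rfl : i = 0 := by simpa using hi
  refine ⟨hc, ⟨0, hi, rfl⟩, ?_⟩
  rintro _ ⟨j, hj, rfl⟩
  obtain rfl : j = 0 := by simpa using hj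
  exact iff_of_true hci rfl

lemma Sides.exists_common_pendants (h : Sides G C A B) (hA : IsPathOn G A l r)
    (hB : IsPathOn G B l' r') (hC : C.Nontrivial) (ha : Pendant G C A a l)
    (hb : Pendant G C A b r) (hc : Pendant G C B c l') (hd : Pendant G C B d r') :
    ∃ x y, x ≠ y ∧ (Pendant G C A x l ∧ Pendant G C A y r) ∧
      (Pendant G C B x l' ∧ Pendant G C B y r' ∨ Pendant G C B x r' ∧ Pendant G C B y l') := by
  by_cases hlr : l = r
  · have hA' {x} (hx : x ∈ C) := hA.pendant_of_eq hlr h.left hx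
    by_cases hlr' : l' = r'
    · have hB' {x} (hx : x ∈ C) := hB.pendant_of_eq hlr' h.right hx
      obtain ⟨x, hx, y, hy, hxy⟩ := hC
      exact ⟨x, y, hxy, ⟨(hA' hx).1, (hA' hy).2⟩, .inl ⟨(hB' hx).1, (hB' hy).2⟩⟩
    · exact ⟨c, d, hc.ne hd hlr', ⟨(hA' hc.mem).1, (hA' hd.mem).2⟩, .inl ⟨hc, hd⟩⟩
  · by_cases hlr' : l' = r'
    · have hB' {x} (hx : x ∈ C) := hB.pendant_of_eq hlr' h.right hx
      exact ⟨a, b, ha.ne hb hlr, ⟨ha, hb⟩, .inl ⟨(hB' ha.mem).1, (hB' hb.mem).2⟩⟩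
    · rcases h.sharedPendant_ends hA hB hlr hlr' ha hb hc hd with
        ⟨⟨x, hxl, hx⟩, y, hyr, hy⟩ | ⟨⟨x, hxl, hx⟩, y, hyr, hy⟩
      · exact ⟨x, y, hxl.ne hyr hlr, ⟨hxl, hyr⟩, .inl ⟨hx, hy⟩⟩
      · exact ⟨x, y, hxl.ne hyr hlr, ⟨hxl, hyr⟩, .inr ⟨hx, hy⟩⟩

lemma Sides.exists_isSpanningPath (h : Sides G C A B) (hA : Minimal (Attached G C) A)
    (hAfin : A.Finite) (hB : Minimal (Attached G C) B) (hBfin : B.Finite) (hC : C.Nontrivial) :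
    ∃ x ∈ C, ∃ y ∈ C, x ≠ y ∧ (∃ m f, IsSpanningPath G A x y m f) ∧
      ∃ n g, IsSpanningPath G B x y n g := by
  obtain ⟨l, r, a, b, hApath, ha, hb⟩ := h.symm.exists_isPathOn hA hAfin hC.nonempty
  obtain ⟨l', r', c, d, hBpath, hc, hd⟩ := h.exists_isPathOn hB hBfin hC.nonempty
  obtain ⟨x, y, hxy, ⟨hxl, hyr⟩, hxy'⟩ := h.exists_common_pendants hApath hBpath hC ha hb hc hd
  refine ⟨x, hxl.mem, y, hyr.mem, hxy,
    hApath.exists_isSpanningPath h.left h.indep hxl hyr hxy, ?_⟩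
  rcases hxy' with ⟨hx, hy⟩ | ⟨hx, hy⟩
  · exact hBpath.exists_isSpanningPath h.right h.indep hx hy hxy
  · exact hBpath.symm.exists_isSpanningPath h.right h.indep hx hy hxy

end SpanningPaths

section FullComponents

variable {W : Type} {G : SimpleGraph W} {A B C X : Set W}

lemma Attached.exists_finite_subset (hX : Attached G C X) (hC : C.Finite) :
    ∃ T ⊆ X, T.Finite ∧ Attached G C T := by
  suffices h : ∃ T ⊆ X, T.Finite ∧ (G.induce T).Connected ∧ ∀ c ∈ C, ∃ x ∈ T, G.Adj c x by
    obtain ⟨T, hTX, hfin, hconn, hadj⟩ := h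
    exact ⟨T, hTX, hfin, hconn, fun x hx => hX.disjoint x (hTX hx), hadj⟩
  induction C, hC using Set.Finite.induction_on with
  | empty =>
    obtain ⟨v, hv⟩ := hX.connected.nonempty
    exact ⟨{v}, by simpa using hv, Set.finite_singleton v, connected_induce_singleton v, by simp⟩
  | @insert c D _ _ ih =>
    obtain ⟨T, hTX, hfin, hconn, hadj⟩ := ih ⟨hX.connected,
      fun x hx hxD => hX.disjoint x hx (.inr hxD), fun d hd => hX.exists_adj d (.inr hd)⟩
    obtain ⟨t, ht⟩ := hconn.nonempty
    obtain ⟨x, hx, hcx⟩ := hX.exists_adj c (.inl rfl)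
    obtain ⟨w, hw⟩ := exists_walk_support_subset hX.connected (hTX ht) hx
    refine ⟨T ∪ {v | v ∈ w.support}, Set.union_subset hTX hw, hfin.union w.support.finite_toSet,
      induce_union_connected hconn.preconnected w.connected_induce_support.preconnected
        ⟨t, ht, w.start_mem_support⟩, ?_⟩
    rintro d (rfl | hd)
    · exact ⟨x, .inr w.end_mem_support, hcx⟩
    · obtain ⟨y, hy, hdy⟩ := hadj d hd
      exact ⟨y, .inl hy, hdy⟩

lemma Attached.exists_finite_minimal (hX : Attached G C X) (hC : C.Finite) :
    ∃ T ⊆ X, T.Finite ∧ Minimal (Attached G C) T := by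
  obtain ⟨S, hSX, hSfin, hS⟩ := hX.exists_finite_subset hC
  obtain ⟨T, hTS, hT⟩ := (hSfin.finite_subsets.subset
    (fun T hT => hT.2 : {T | Attached G C T ∧ T ⊆ S} ⊆ _)).exists_le_minimal ⟨hS, subset_rfl⟩
  exact ⟨T, hTS.trans hSX, hSfin.subset hTS, hT.prop.1,
    fun R hR hRT => hT.le_of_le ⟨hR, hRT.trans hTS⟩ hRT⟩

lemma attached_of_isFullComponent (hA : IsFullComponent G C A) : Attached G C A :=
  ⟨hA.2.2.1, fun _ hx => Set.disjoint_left.1 hA.2.1 hx, hA.2.2.2.2⟩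

lemma subset_of_isFullComponent_of_inter_nonempty (hA : IsFullComponent G C A)
    (hB : IsFullComponent G C B) (hAB : (A ∩ B).Nonempty) : A ⊆ B := by
  by_contra hsub
  obtain ⟨t, ht, s, hs, hts⟩ := exists_adj_boundary hA.2.2.1
    (Set.inter_subset_left.ssubset_of_ne (mt Set.inter_eq_left.1 hsub)) hAB
  rcases hB.2.2.2.1 t ht.2 s hts with hsB | hsC
  · exact hs.2 ⟨hs.1, hsB⟩
  · exact Set.disjoint_left.1 hA.2.1 hs.1 hsC

lemma anticomplete_of_isFullComponent (hA : IsFullComponent G C A) (hB : IsFullComponent G C B)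
    (hAB : A ≠ B) : Anticomplete G A B := by
  have hdisj : Disjoint A B := Set.disjoint_iff_inter_eq_empty.2 <|
    Set.not_nonempty_iff_eq_empty.1 fun hne => hAB <| Set.Subset.antisymm
      (subset_of_isFullComponent_of_inter_nonempty hA hB hne)
      (subset_of_isFullComponent_of_inter_nonempty hB hA (Set.inter_comm A B ▸ hne))
  refine fun a ha b hb => ⟨hdisj.ne_of_mem ha hb, fun hab => ?_⟩
  rcases hA.2.2.2.1 a ha b hab with hbA | hbC
  · exact Set.disjoint_left.1 hdisj hbA hb
  · exact Set.disjoint_left.1 hB.2.1 hb hbC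

lemma Attached.exists_adj_ne (hX : Attached G C X) {c x y : W} (hc : c ∈ C) (hx : x ∈ C)
    (hy : y ∈ C) : ∃ w ∈ insert x (insert y X), w ≠ x ∧ w ≠ y ∧ G.Adj c w := by
  obtain ⟨w, hw, hcw⟩ := hX.exists_adj c hc
  exact ⟨w, .inr (.inr hw), fun h => hX.disjoint w hw (h ▸ hx), fun h => hX.disjoint w hw (h ▸ hy),
    hcw⟩

end FullComponents

theorem statement9_general {W : Type} (G : SimpleGraph W) (htheta : ¬ContainsTheta G)
    (hprism : ¬ContainsPrism G) (hpyramid : ¬ContainsPyramid G) (C : Set W) (hcard : 2 ≤ C.ncard)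
    (hind : ∀ x ∈ C, ∀ y ∈ C, ¬G.Adj x y) (A B : Set W) (hA : IsFullComponent G C A)
    (hB : IsFullComponent G C B) (hAB : A ≠ B) :
    ∃ x ∈ C, ∃ y ∈ C, x ≠ y ∧ ∃ (pA pB : G.Walk x y),
      IsInducedPathW G pA ∧ IsInducedPathW G pB ∧
      (∀ w ∈ pA.support, w ≠ x → w ≠ y → w ∈ A) ∧
      (∀ w ∈ pB.support, w ≠ x → w ≠ y → w ∈ B) ∧
      (∀ c ∈ C, c ≠ x → c ≠ y →
        (∃ w ∈ pA.support, w ≠ x ∧ w ≠ y ∧ G.Adj c w) ∧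
        (∃ w ∈ pB.support, w ≠ x ∧ w ≠ y ∧ G.Adj c w)) ∧
      (∃ (m : ℕ) (g : ZMod m → W), IsHoleEmb G m g ∧
        Set.range g = {w : W | w ∈ pA.support ∨ w ∈ pB.support}) := by
  obtain ⟨hCnt, hCfin⟩ := Set.one_lt_ncard_iff_nontrivial_and_finite.1 hcard
  obtain ⟨A₀, hA₀, hA₀fin, hA₀min⟩ := (attached_of_isFullComponent hA).exists_finite_minimal hCfin
  obtain ⟨B₀, hB₀, hB₀fin, hB₀min⟩ := (attached_of_isFullComponent hB).exists_finite_minimal hCfin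
  have hanti := (anticomplete_of_isFullComponent hA hB hAB).mono hA₀ hB₀
  have hsides : Sides G C A₀ B₀ :=
    ⟨hA₀min.prop, hB₀min.prop, hanti, hind, ⟨htheta, hprism, hpyramid⟩⟩
  obtain ⟨x, hx, y, hy, hxy, ⟨m, f, hf⟩, n, g, hg⟩ :=
    hsides.exists_isSpanningPath hA₀min hA₀fin hB₀min hB₀fin hCnt
  obtain ⟨pA, hpA, hsuppA⟩ := hf.exists_isInducedPathW
  obtain ⟨pB, hpB, hsuppB⟩ := hg.exists_isInducedPathW
  obtain ⟨k, hk, hrange⟩ := hf.exists_isHoleEmb hg hanti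
  refine ⟨x, hx, y, hy, hxy, pA, pB, hpA, hpB, ?_, ?_, ?_, m + n, k, hk, ?_⟩
  all_goals simp only [hsuppA, hsuppB]
  · exact fun w hw hwx hwy => hA₀ ((hw.resolve_left hwx).resolve_left hwy)
  · exact fun w hw hwx hwy => hB₀ ((hw.resolve_left hwx).resolve_left hwy)
  · exact fun c hc _ _ => ⟨hsides.left.exists_adj_ne hc hx hy, hsides.right.exists_adj_ne hc hx hy⟩
  · exact hrange

/-- Let `G ∈ 𝒞`, let `C` be a minimal separator of size at least 2 that is
an independent set and let `A, B` be distinct components of `G ∖ C` full to `C`. Then there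
are `x, y ∈ C` and chordless paths `P_A` from `x` to `y` with interior in `A` and `P_B` from
`x` to `y` with interior in `B` such that every vertex of `C ∖ {x,y}` has neighbors in the
interiors of both, and `V(P_A) ∪ V(P_B)` induces a hole. -/
theorem statement9 (G : SimpleGraph V) (hG : InClassC G)
    (C : Set V) (hmin : MinSeparator G C) (hcard : 2 ≤ C.ncard)
    (hind : ∀ x ∈ C, ∀ y ∈ C, ¬G.Adj x y)
    (A B : Set V) (hA : IsFullComponent G C A) (hB : IsFullComponent G C B) (hAB : A ≠ B) :
    ∃ x ∈ C, ∃ y ∈ C, x ≠ y ∧ ∃ (pA pB : G.Walk x y),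
      IsInducedPathW G pA ∧ IsInducedPathW G pB ∧
      (∀ w ∈ pA.support, w ≠ x → w ≠ y → w ∈ A) ∧
      (∀ w ∈ pB.support, w ≠ x → w ≠ y → w ∈ B) ∧
      (∀ c ∈ C, c ≠ x → c ≠ y →
        (∃ w ∈ pA.support, w ≠ x ∧ w ≠ y ∧ G.Adj c w) ∧
        (∃ w ∈ pB.support, w ≠ x ∧ w ≠ y ∧ G.Adj c w)) ∧
      (∃ (m : ℕ) (g : ZMod m → V), IsHoleEmb G m g ∧
        Set.range g = {w : V | w ∈ pA.support ∨ w ∈ pB.support}) :=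
  statement9_general G hG.1 hG.2.1 hG.2.2.1 C hcard hind A B hA hB hAB
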